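/- arXiv:1410.7727 — 6 statements merged into one kernel-verified Lean document; each statement's English description precedes it below -/
import Mathlib

section
/- Let Z be a compact metric space, g : Z → Z a continuous map, and φ : Z → ℝ^k a continuous function. Then for every extreme point v of the convex hull of rot_MZ(Z,g,φ) there exists an ergodic g-invariant Borel probability measure μ on Z with ∫ φ dμ = v; in particular, there exists a point z ∈ Z which is recurrent for g (i.e. g^{r_i}(z) → z for some sequence r_i → ∞) and whose Birkhoff average φ̂(z) exists and equals v. -/
open Filter Topology MeasureTheory

noncomputable def cocycle {Z : Type*} {k : ℕ} (g : Z → Z) (φ : Z → Fin k → ℝ) (z : Z) (r : ℕ) :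
    Fin k → ℝ := ∑ i ∈ Finset.range r, φ (g^[i] z)

/-- The Birkhoff average of `φ` along the `g`-orbit of `z` exists and equals `v`. -/
def hasAvg {Z : Type*} {k : ℕ} (g : Z → Z) (φ : Z → Fin k → ℝ) (z : Z) (v : Fin k → ℝ) : Prop :=
  Tendsto (fun r : ℕ => (r : ℝ)⁻¹ • cocycle g φ z r) atTop (nhds v)

/-- The pointwise rotation set. -/
def rotP {Z : Type*} {k : ℕ} (g : Z → Z) (φ : Z → Fin k → ℝ) : Set (Fin k → ℝ) :=
  {v | ∃ z, hasAvg g φ z v}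

/-- The pointwise rotation set of points in a subset `W`. -/
def rotPOn {Z : Type*} {k : ℕ} (g : Z → Z) (φ : Z → Fin k → ℝ) (W : Set Z) : Set (Fin k → ℝ) :=
  {v | ∃ z ∈ W, hasAvg g φ z v}

/-- The Misiurewicz–Ziemian rotation set. -/
def rotMZ {Z : Type*} {k : ℕ} (g : Z → Z) (φ : Z → Fin k → ℝ) : Set (Fin k → ℝ) :=
  {v | ∃ (z : ℕ → Z) (r : ℕ → ℕ), Tendsto r atTop atTop ∧
    Tendsto (fun i => (r i : ℝ)⁻¹ • cocycle g φ (z i) (r i)) atTop (nhds v)}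

/-- The measure rotation set. -/
def rotM {Z : Type*} [MeasurableSpace Z] {k : ℕ} (g : Z → Z) (φ : Z → Fin k → ℝ) :
    Set (Fin k → ℝ) :=
  {v | ∃ μ : Measure Z, IsProbabilityMeasure μ ∧ MeasurePreserving g μ μ ∧ (∫ z, φ z ∂μ) = v}

/-- The set of recurrent points of `g`. -/
def RecSet {Z : Type*} [TopologicalSpace Z] (g : Z → Z) : Set Z :=
  {z | ∃ r : ℕ → ℕ, Tendsto r atTop atTop ∧ Tendsto (fun i => g^[r i] z) atTop (nhds z)}

noncomputable def maxF {Z : Type*} (g : Z → Z) (f : Z → ℝ) : ℕ → Z → ℝ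
  | 0, _ => 0
  | n + 1, x => max 0 (f x + maxF g f n (g x))

lemma maxF_nonneg {Z : Type*} (g : Z → Z) (f : Z → ℝ) (n : ℕ) (x : Z) : 0 ≤ maxF g f n x := by
  cases n <;> simp [maxF]

lemma maxF_le {Z : Type*} (g : Z → Z) (f : Z → ℝ) (C : ℝ) (hC : ∀ x, |f x| ≤ C) (n : ℕ) :
    ∀ x : Z, maxF g f n x ≤ n * C := by
  induction n with
  | zero => intro x; simp [maxF]
  | succ n ih =>
    intro x
    have h0 : 0 ≤ C := (abs_nonneg _).trans (hC x)
    have h1 := (abs_le.1 (hC x)).2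
    have h2 := ih (g x)
    simp only [maxF]
    push_cast
    apply max_le
    · positivity
    · linarith

lemma maxF_mono {Z : Type*} (g : Z → Z) (f : Z → ℝ) (n : ℕ) :
    ∀ x : Z, maxF g f n x ≤ maxF g f (n + 1) x := by
  induction n with
  | zero => intro x; simp [maxF]
  | succ n ih =>
    intro x
    have := ih (g x)
    simp only [maxF] at this ⊢
    gcongr

lemma maxF_sum {Z : Type*} (g : Z → Z) (f : Z → ℝ) (n : ℕ) :
    ∀ x : Z, ∑ i ∈ Finset.range n, f (g^[i] x) ≤ maxF g f n x := by
  induction n with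
  | zero => intro x; simp [maxF]
  | succ n ih =>
    intro x
    rw [Finset.sum_range_succ']
    have := ih (g x)
    simp only [maxF, Function.iterate_succ_apply, Function.iterate_zero, id]
    refine le_trans ?_ (le_max_right _ _)
    linarith

lemma maxF_meas {Z : Type*} [MeasurableSpace Z] (g : Z → Z) (f : Z → ℝ) (hg : Measurable g)
    (hf : Measurable f) (n : ℕ) : Measurable (maxF g f n) := by
  induction n with
  | zero => exact measurable_const
  | succ n ih =>
    have : maxF g f (n + 1) = fun x => max 0 (f x + maxF g f n (g x)) := rfl
    rw [this]
    exact measurable_const.max (hf.add (ih.comp hg))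

lemma birk_bdd {Z : Type*} [MeasurableSpace Z] (g : Z → Z) (μ : Measure Z)
    [IsProbabilityMeasure μ] (he : Ergodic g μ) (f : Z → ℝ) (hf : Measurable f) (C : ℝ)
    (hC : ∀ x, |f x| ≤ C) (hneg : ∫ x, f x ∂μ < 0) :
    ∀ᵐ x ∂μ, ∃ B : ℝ, ∀ n : ℕ, ∑ i ∈ Finset.range n, f (g^[i] x) ≤ B := by
  have hg : Measurable g := he.measurable
  have hFm := maxF_meas g f hg hf
  set A : Set Z := {x | ∃ B : ℕ, ∀ n : ℕ, maxF g f n x ≤ B} with hA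
  have hAm : MeasurableSet A := by
    have : A = ⋃ B : ℕ, ⋂ n : ℕ, {x | maxF g f n x ≤ B} := by
      ext x; simp [hA]
    rw [this]
    exact MeasurableSet.iUnion fun B => MeasurableSet.iInter fun n =>
      measurableSet_le (hFm n) measurable_const
  have hAi : g ⁻¹' A = A := by
    ext x
    simp only [hA, Set.mem_preimage, Set.mem_ofPred_eq]
    constructor
    · rintro ⟨B, hB⟩
      obtain ⟨D, hD⟩ := exists_nat_ge (C + B)
      refine ⟨D, fun n => ?_⟩
      have h0 : 0 ≤ C := (abs_nonneg _).trans (hC x)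
      have hBn : (0:ℝ) ≤ B := B.cast_nonneg
      refine (maxF_mono g f n x).trans ?_
      simp only [maxF]
      have h1 := (abs_le.1 (hC x)).2
      have h2 := hB n
      apply max_le <;> linarith
    · rintro ⟨B, hB⟩
      obtain ⟨D, hD⟩ := exists_nat_ge (C + B)
      refine ⟨D, fun n => ?_⟩
      have h1 := (abs_le.1 (hC x)).1
      have h2 := hB (n + 1)
      simp only [maxF] at h2
      have h3 := (le_max_right _ _).trans h2
      linarith
  rcases he.toPreErgodic.ae_mem_or_ae_notMem hAm hAi with h | h
  · filter_upwards [h] with x hx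
    obtain ⟨B, hB⟩ := hx
    exact ⟨B, fun n => (maxF_sum g f n x).trans (hB n)⟩
  · exfalso
    have hFi : ∀ n, Integrable (maxF g f n) μ := fun n =>
      Integrable.of_bound (hFm n).aestronglyMeasurable (n * C) (ae_of_all _ fun x => by
        rw [Real.norm_eq_abs, abs_of_nonneg (maxF_nonneg _ _ _ _)]
        exact maxF_le g f C hC n x)
    have hlim : Tendsto (fun n => ∫ x, (maxF g f (n + 1) x - maxF g f n (g x)) ∂μ) atTop
        (𝓝 (∫ x, f x ∂μ)) := by
      apply tendsto_integral_of_dominated_convergence (fun _ => C)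
      · intro n
        exact ((hFm (n + 1)).sub ((hFm n).comp hg)).aestronglyMeasurable
      · exact integrable_const _
      · intro n
        refine ae_of_all _ fun x => ?_
        have h0 := maxF_nonneg g f n (g x)
        have h1 := abs_le.1 (hC x)
        have hC0 : 0 ≤ C := (abs_nonneg _).trans (hC x)
        rw [Real.norm_eq_abs, abs_le]
        simp only [maxF]
        have h2 := le_max_right 0 (f x + maxF g f n (g x))
        constructor
        · linarith
        · have : max 0 (f x + maxF g f n (g x)) ≤ C + maxF g f n (g x) := by
            apply max_le <;> linarith
          linarith
      · filter_upwards [h] with x hx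
        have hx' : g x ∉ A := fun h' => hx (by rw [← hAi]; exact h')
        simp only [hA, Set.mem_ofPred_eq, not_exists, not_forall, not_le] at hx'
        obtain ⟨B, hB⟩ := exists_nat_ge C
        obtain ⟨n, hn⟩ := hx' B
        apply tendsto_const_nhds.congr'
        filter_upwards [eventually_ge_atTop n] with m hm
        have h3 : maxF g f n (g x) ≤ maxF g f m (g x) :=
          monotone_nat_of_le_succ (fun k => maxF_mono g f k (g x)) hm
        have h1 := (abs_le.1 (hC x)).1
        simp only [maxF]
        rw [max_eq_right (by linarith)]
        ring
    have : 0 ≤ ∫ x, f x ∂μ := by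
      apply ge_of_tendsto' hlim
      intro n
      have hc : Integrable (fun x => maxF g f n (g x)) μ :=
        (he.toMeasurePreserving.integrable_comp (hFm n).aestronglyMeasurable).2 (hFi n)
      rw [integral_sub (hFi _) hc]
      have e : ∫ x, maxF g f n (g x) ∂μ = ∫ x, maxF g f n x ∂μ := by
        conv_rhs => rw [← he.toMeasurePreserving.map_eq]
        rw [integral_map hg.aemeasurable (hFm n).aestronglyMeasurable]
      rw [e, sub_nonneg]
      exact integral_mono (hFi _) (hFi _) (maxF_mono g f n)
    linarith

lemma birk_upper {Z : Type*} [MeasurableSpace Z] (g : Z → Z) (μ : Measure Z)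
    [IsProbabilityMeasure μ] (he : Ergodic g μ) (f : Z → ℝ) (hf : Measurable f) (C : ℝ)
    (hC : ∀ x, |f x| ≤ C) :
    ∀ᵐ x ∂μ, ∀ ε > 0, ∀ᶠ n : ℕ in atTop,
      (n : ℝ)⁻¹ * ∑ i ∈ Finset.range n, f (g^[i] x) < ∫ x, f x ∂μ + ε := by
  have hfi : Integrable f μ := Integrable.of_bound hf.aestronglyMeasurable C (ae_of_all _ hC)
  have key : ∀ m : ℕ, ∀ᵐ x ∂μ, ∃ B : ℝ, ∀ n : ℕ, ∑ i ∈ Finset.range n,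
      (f (g^[i] x) - (∫ x, f x ∂μ + 1 / ((m : ℝ) + 1))) ≤ B := by
    intro m
    apply birk_bdd g μ he (fun x => f x - (∫ x, f x ∂μ + 1 / ((m : ℝ) + 1)))
      (hf.sub measurable_const) (C + |∫ x, f x ∂μ + 1 / ((m : ℝ) + 1)|)
    · intro x
      exact (abs_sub _ _).trans (by gcongr; exact hC x)
    · rw [integral_sub hfi (integrable_const _)]
      simp only [integral_const, probReal_univ, one_smul]
      have : 0 < 1 / ((m : ℝ) + 1) := by positivity
      linarith
  filter_upwards [ae_all_iff.2 key] with x hx ε hε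
  obtain ⟨m, hm⟩ := exists_nat_one_div_lt (half_pos hε)
  obtain ⟨B, hB⟩ := hx m
  obtain ⟨N, hN⟩ := exists_nat_gt (B / (ε / 2))
  filter_upwards [eventually_ge_atTop (N + 1)] with n hn
  have hB' := hB n
  rw [Finset.sum_sub_distrib, Finset.sum_const, Finset.card_range, nsmul_eq_mul] at hB'
  have hnN : (N : ℝ) + 1 ≤ n := by exact_mod_cast hn
  have hn0 : (0 : ℝ) < n := by have : (0:ℝ) ≤ N := N.cast_nonneg
                               linarith
  rw [inv_mul_lt_iff₀ hn0]
  rw [div_lt_iff₀ (half_pos hε)] at hN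
  have : (N : ℝ) * (ε / 2) ≤ n * (ε / 2) := by gcongr; linarith
  have : (n : ℝ) * (1 / ((m : ℝ) + 1)) ≤ n * (ε / 2) := by gcongr
  nlinarith

lemma birk_s0 {Z : Type*} [MeasurableSpace Z] (g : Z → Z) (μ : Measure Z)
    [IsProbabilityMeasure μ] (he : Ergodic g μ) (f : Z → ℝ) (hf : Measurable f) (C : ℝ)
    (hC : ∀ x, |f x| ≤ C) :
    ∀ᵐ x ∂μ, Tendsto (fun n : ℕ => (n : ℝ)⁻¹ * ∑ i ∈ Finset.range n, f (g^[i] x)) atTop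
      (𝓝 (∫ x, f x ∂μ)) := by
  have h1 := birk_upper g μ he f hf C hC
  have h2 := birk_upper g μ he (fun x => - f x) hf.neg C (by simpa using hC)
  filter_upwards [h1, h2] with x h1 h2
  rw [Metric.tendsto_nhds]
  intro ε hε
  filter_upwards [h1 ε hε, h2 ε hε] with n a b
  rw [Finset.sum_neg_distrib, mul_neg, integral_neg] at b
  rw [Real.dist_eq, abs_lt]
  constructor <;> linarith

lemma rec_and_avg {Z : Type*} [MetricSpace Z] [CompactSpace Z] [MeasurableSpace Z] [BorelSpace Z]
    {k : ℕ} (g : Z → Z) (φ : Z → Fin k → ℝ) (hφ : Continuous φ)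
    (μ : Measure Z) [IsProbabilityMeasure μ] (he : Ergodic g μ) :
    ∃ z ∈ RecSet g, hasAvg g φ z (∫ z, φ z ∂μ) := by
  have hφi : ∀ i, Continuous fun z => φ z i := fun i => (continuous_apply i).comp hφ
  have hb : ∀ i, ∃ C, ∀ x, |φ x i| ≤ C := fun i => by
    obtain ⟨C, hC⟩ := isCompact_univ.exists_bound_of_continuousOn (hφi i).continuousOn
    exact ⟨C, fun x => hC x trivial⟩
  choose C hC using hb
  have hint : ∀ i, Integrable (fun z => φ z i) μ := fun i =>
    Integrable.of_bound (hφi i).measurable.aestronglyMeasurable (C i) (ae_of_all _ (hC i))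
  have h1 : ∀ᵐ x ∂μ, ∀ i, Tendsto (fun n : ℕ => (n : ℝ)⁻¹ * ∑ j ∈ Finset.range n, φ (g^[j] x) i)
      atTop (𝓝 (∫ x, φ x i ∂μ)) :=
    ae_all_iff.2 fun i => birk_s0 g μ he (fun z => φ z i) (hφi i).measurable (C i) (hC i)
  have h2 := he.toMeasurePreserving.conservative.ae_frequently_mem_of_mem_nhds
  obtain ⟨x, hx1, hx2⟩ := (h1.and h2).exists
  refine ⟨x, ?_, ?_⟩
  · have : MapClusterPt x atTop (fun n => g^[n] x) := mapClusterPt_iff_frequently.2 hx2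
    obtain ⟨ψ, hψ, h⟩ := this.tendsto_subseq
    exact ⟨ψ, hψ.tendsto_atTop, h⟩
  · rw [hasAvg, tendsto_pi_nhds]
    intro i
    rw [eval_integral hint]
    simpa [cocycle] using hx1 i

lemma isCompact_hull {k : ℕ} {S : Set (Fin k → ℝ)} (hS : IsCompact S) :
    IsCompact (convexHull ℝ S) := by
  have : convexHull ℝ S = ⋃ n ∈ Set.Iic (k + 1),
      (fun p : (Fin n → ℝ) × (Fin n → Fin k → ℝ) => ∑ i, p.1 i • p.2 i) ''
        (stdSimplex ℝ (Fin n) ×ˢ Set.univ.pi fun _ => S) := by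
    apply Set.Subset.antisymm
    · intro x hx
      obtain ⟨ι, _, z, w, hz, hai, hw, hw1, hx⟩ := eq_pos_convex_span_of_mem_convexHull hx
      have hc : Fintype.card ι ≤ k + 1 := by
        refine hai.card_le_finrank_succ.trans ?_
        have := Submodule.finrank_le (vectorSpan ℝ (Set.range z))
        simp at this
        omega
      let e := (Fintype.equivFin ι).symm
      simp only [Set.mem_iUnion]
      refine ⟨Fintype.card ι, hc, (fun i => w (e i), fun i => z (e i)), ⟨⟨?_, ?_⟩, ?_⟩, ?_⟩
      · intro i; exact (hw _).le
      · simpa [hw1] using e.sum_comp w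
      · intro i _; exact hz ⟨_, rfl⟩
      · simpa [hx] using e.sum_comp (fun i => w i • z i)
    · intro x hx
      simp only [Set.mem_iUnion] at hx
      obtain ⟨n, -, ⟨w, z⟩, ⟨⟨h0, h1⟩, hz⟩, rfl⟩ := hx
      exact (convex_convexHull ℝ S).sum_mem (fun i _ => h0 i) h1
        (fun i _ => subset_convexHull ℝ S (hz i trivial))
  rw [this]
  refine (Set.finite_Iic _).isCompact_biUnion fun n _ => ?_
  exact ((isCompact_stdSimplex ℝ (Fin n)).prod (isCompact_univ_pi fun _ => hS)).image
    (by fun_prop)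

lemma isClosed_rotMZ {Z : Type*} {k : ℕ} (g : Z → Z) (φ : Z → Fin k → ℝ) :
    IsClosed (rotMZ g φ) := by
  apply isClosed_of_closure_subset
  intro v hv
  have key : ∀ n : ℕ, ∃ z : Z, ∃ r : ℕ, n ≤ r ∧
      dist ((r : ℝ)⁻¹ • cocycle g φ z r) v < 1 / ((n : ℝ) + 1) := by
    intro n
    have hp : 0 < (1 / ((n : ℝ) + 1)) / 2 := by positivity
    obtain ⟨w, ⟨z, r, hr, hw⟩, hd⟩ := Metric.mem_closure_iff.1 hv _ hp
    obtain ⟨i, hi1, hi2⟩ := ((hr.eventually_ge_atTop n).and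
      (Metric.tendsto_nhds.1 hw _ hp)).exists
    refine ⟨z i, r i, hi1, ?_⟩
    have := dist_triangle ((r i : ℝ)⁻¹ • cocycle g φ (z i) (r i)) w v
    rw [dist_comm w v] at this
    linarith
  choose z r hr hd using key
  refine ⟨z, r, tendsto_atTop_mono hr tendsto_id, ?_⟩
  rw [tendsto_iff_dist_tendsto_zero]
  exact squeeze_zero (fun _ => dist_nonneg) (fun n => (hd n).le)
    tendsto_one_div_add_atTop_nhds_zero_nat

lemma avg_bound {Z : Type*} {k : ℕ} (g : Z → Z) (φ : Z → Fin k → ℝ) (C : ℝ) (hC0 : 0 ≤ C)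
    (hC : ∀ z, ‖φ z‖ ≤ C) (z : Z) (r : ℕ) : ‖(r : ℝ)⁻¹ • cocycle g φ z r‖ ≤ C := by
  have h1 : ‖cocycle g φ z r‖ ≤ r * C := by
    refine (norm_sum_le_of_le _ (fun i _ => hC (g^[i] z))).trans ?_
    simp
  rw [norm_smul, norm_inv, Real.norm_natCast]
  rcases Nat.eq_zero_or_pos r with h | h
  · simp [h, hC0]
  · rw [inv_mul_le_iff₀ (by exact_mod_cast h)]
    exact h1

lemma exists_bd {Z : Type*} [TopologicalSpace Z] [CompactSpace Z] {E : Type*}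
    [NormedAddCommGroup E] (φ : Z → E) (hφ : Continuous φ) :
    ∃ C, 0 ≤ C ∧ ∀ z, ‖φ z‖ ≤ C := by
  obtain ⟨C, hC⟩ := isCompact_univ.exists_bound_of_continuousOn hφ.continuousOn
  exact ⟨max C 0, le_max_right _ _, fun z => (hC z trivial).trans (le_max_left _ _)⟩

lemma cont_integrable {Z : Type*} [MetricSpace Z] [CompactSpace Z] [MeasurableSpace Z]
    [BorelSpace Z] {E : Type*} [NormedAddCommGroup E] (φ : Z → E)
    (hφ : Continuous φ) (μ : Measure Z) [IsFiniteMeasure μ] : Integrable φ μ := by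
  have := hφ.continuousOn.integrableOn_compact (μ := μ) isCompact_univ
  simpa using this

lemma isCompact_rotMZ {Z : Type*} [MetricSpace Z] [CompactSpace Z] {k : ℕ} (g : Z → Z)
    (φ : Z → Fin k → ℝ) (hφ : Continuous φ) : IsCompact (rotMZ g φ) := by
  obtain ⟨C, hC0, hC⟩ := exists_bd φ hφ
  refine (isCompact_closedBall (0 : Fin k → ℝ) C).of_isClosed_subset (isClosed_rotMZ g φ) ?_
  rintro v ⟨z, r, hr, hv⟩
  rw [mem_closedBall_zero_iff]
  exact le_of_tendsto' hv.norm fun i => avg_bound g φ C hC0 hC _ _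

lemma integral_comp_iter {Z : Type*} [MetricSpace Z] [CompactSpace Z] [MeasurableSpace Z]
    [BorelSpace Z] {E : Type*} [NormedAddCommGroup E] [NormedSpace ℝ E]
    (g : Z → Z) (φ : Z → E) (hφ : Continuous φ) (μ : Measure Z) [IsProbabilityMeasure μ]
    (hm : MeasurePreserving g μ μ) (i : ℕ) : ∫ z, φ (g^[i] z) ∂μ = ∫ z, φ z ∂μ := by
  have h := hm.iterate i
  conv_rhs => rw [← h.map_eq]
  rw [integral_map h.measurable.aemeasurable]
  rw [h.map_eq]
  exact (cont_integrable φ hφ μ).aestronglyMeasurable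

lemma rotM_subset {Z : Type*} [MetricSpace Z] [CompactSpace Z] [MeasurableSpace Z] [BorelSpace Z]
    {k : ℕ} (g : Z → Z) (hg : Continuous g) (φ : Z → Fin k → ℝ) (hφ : Continuous φ) :
    rotM g φ ⊆ convexHull ℝ (rotMZ g φ) := by
  rintro v ⟨μ, hμ, hm, rfl⟩
  by_contra hv
  obtain ⟨l, u, hl, hu⟩ := geometric_hahn_banach_closed_point (convex_convexHull ℝ _)
    (isCompact_hull (isCompact_rotMZ g φ hφ)).isClosed hv
  have key : ∀ n : ℕ, ∃ z : Z, l (∫ z, φ z ∂μ) ≤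
      l (((n + 1 : ℕ) : ℝ)⁻¹ • cocycle g φ z (n + 1)) := by
    intro n
    have hc : Continuous fun z => ((n + 1 : ℕ) : ℝ)⁻¹ • cocycle g φ z (n + 1) := by
      unfold cocycle
      have : ∀ i, Continuous fun z => φ (g^[i] z) := fun i => hφ.comp (hg.iterate i)
      fun_prop
    obtain ⟨z, hz⟩ := exists_integral_le (cont_integrable _ (l.continuous.comp hc) μ)
    refine ⟨z, le_trans (le_of_eq ?_) hz⟩
    simp only [Function.comp_def]
    rw [l.integral_comp_comm (cont_integrable _ hc μ)]
    congr 1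
    rw [integral_smul]
    unfold cocycle
    rw [integral_finsetSum _ (fun i _ => cont_integrable (fun z => φ (g^[i] z))
      (hφ.comp (hg.iterate i)) μ)]
    simp only [integral_comp_iter g φ hφ μ hm]
    rw [Finset.sum_const, Finset.card_range, ← Nat.cast_smul_eq_nsmul ℝ, smul_smul,
      inv_mul_cancel₀ (by positivity), one_smul]
  choose z hz using key
  obtain ⟨C, hC0, hC⟩ := exists_bd φ hφ
  obtain ⟨w, -, ψ, hψ, hw⟩ := (isCompact_closedBall (0 : Fin k → ℝ) C).tendsto_subseq
    (x := fun n => ((n + 1 : ℕ) : ℝ)⁻¹ • cocycle g φ (z n) (n + 1))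
    (fun n => by rw [mem_closedBall_zero_iff]; exact avg_bound g φ C hC0 hC _ _)
  have hwm : w ∈ rotMZ g φ :=
    ⟨fun n => z (ψ n), fun n => ψ n + 1, (tendsto_add_atTop_nat 1).comp hψ.tendsto_atTop, hw⟩
  have h1 : l (∫ z, φ z ∂μ) ≤ l w :=
    ge_of_tendsto' ((l.continuous.tendsto w).comp hw) fun n => hz (ψ n)
  have h2 := hl w (subset_convexHull ℝ _ hwm)
  linarith

noncomputable def emp {Z : Type*} [MeasurableSpace Z] (g : Z → Z) (z : Z) (n : ℕ) : Measure Z :=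
  ((n + 1 : ℕ) : ENNReal)⁻¹ • ∑ i ∈ Finset.range (n + 1), Measure.dirac (g^[i] z)

instance emp_prob {Z : Type*} [MeasurableSpace Z] (g : Z → Z) (z : Z) (n : ℕ) :
    IsProbabilityMeasure (emp g z n) := by
  constructor
  simp only [emp, Measure.smul_apply, Measure.finsetSum_apply, measure_univ, smul_eq_mul]
  rw [Finset.sum_const, Finset.card_range, nsmul_eq_mul, mul_one]
  exact ENNReal.inv_mul_cancel (by simp) (by simp)

lemma emp_integral {Z : Type*} [MetricSpace Z] [CompactSpace Z] [MeasurableSpace Z]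
    [BorelSpace Z] (g : Z → Z) (z : Z) (n : ℕ) (f : Z → ℝ) (hf : Continuous f) :
    ∫ x, f x ∂(emp g z n) = ((n + 1 : ℕ) : ℝ)⁻¹ * ∑ i ∈ Finset.range (n + 1), f (g^[i] z) := by
  rw [emp, integral_smul_measure,
    integral_finsetSum_measure (fun i _ => cont_integrable f hf _)]
  simp only [integral_dirac, ENNReal.toReal_inv, ENNReal.toReal_natCast, smul_eq_mul]

lemma rotMZ_subset {Z : Type*} [MetricSpace Z] [CompactSpace Z] [MeasurableSpace Z] [BorelSpace Z]
    {k : ℕ} (g : Z → Z) (hg : Continuous g) (φ : Z → Fin k → ℝ) (hφ : Continuous φ) :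
    rotMZ g φ ⊆ rotM g φ := by
  rintro v ⟨z, r, hr, hv⟩
  let s : ℕ → ℕ := fun i => r i - 1
  let ν : ℕ → ProbabilityMeasure Z := fun i => ⟨emp g (z i) (s i), inferInstance⟩
  let U : Ultrafilter ℕ := hyperfilter ℕ
  have hU : (U : Filter ℕ) ≤ atTop := by
    rw [← Nat.cofinite_eq_atTop]; exact hyperfilter_le_cofinite
  set μ : ProbabilityMeasure Z := (U.map ν).lim with hμ
  have hlim : Tendsto ν U (𝓝 μ) := (U.map ν).le_nhds_lim
  have hint : ∀ f : Z → ℝ, Continuous f → Tendsto (fun i => ((s i + 1 : ℕ) : ℝ)⁻¹ *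
      ∑ j ∈ Finset.range (s i + 1), f (g^[j] (z i))) U (𝓝 (∫ x, f x ∂(μ : Measure Z))) := by
    intro f hf
    have := ((ProbabilityMeasure.continuous_integral_continuousMap (⟨f, hf⟩ : C(Z, ℝ))).tendsto
      μ).comp hlim
    refine this.congr fun i => ?_
    exact emp_integral g (z i) (s i) f hf
  have hs : Tendsto s atTop atTop := (tendsto_sub_atTop_nat 1).comp hr
  refine ⟨μ, inferInstance, ⟨hg.measurable, ?_⟩, ?_⟩
  · have : IsProbabilityMeasure (Measure.map g (μ : Measure Z)) :=
      Measure.isProbabilityMeasure_map hg.measurable.aemeasurable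
    apply ext_of_forall_integral_eq_of_IsFiniteMeasure
    intro f
    rw [integral_map hg.measurable.aemeasurable f.continuous.aestronglyMeasurable]
    have h1 := hint _ f.continuous
    have h2 := hint _ (f.continuous.comp hg)
    have h3 : Tendsto (fun i => ((s i + 1 : ℕ) : ℝ)⁻¹ * (f (g^[s i + 1] (z i)) - f (z i))) U
        (𝓝 0) := by
      refine Tendsto.mono_left ?_ hU
      have ha : Tendsto (fun i => ((s i + 1 : ℕ) : ℝ)⁻¹) atTop (𝓝 0) :=
        tendsto_inv_atTop_zero.comp (tendsto_natCast_atTop_atTop.comp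
          ((tendsto_add_atTop_nat 1).comp hs))
      refine ha.zero_mul_isBoundedUnder_le ?_
      refine isBoundedUnder_of ⟨2 * ‖f‖, fun i => ?_⟩
      have := f.dist_le_two_norm (g^[s i + 1] (z i)) (z i)
      rwa [dist_eq_norm] at this
    have h4 := h1.add h3
    rw [add_zero] at h4
    refine tendsto_nhds_unique h2 (h4.congr fun i => ?_)
    rw [← mul_add]
    congr 1
    have a := Finset.sum_range_succ (fun j => f (g^[j] (z i))) (s i + 1)
    have b := Finset.sum_range_succ' (fun j => f (g^[j] (z i))) (s i + 1)
    simp only [Function.comp_def, ← Function.iterate_succ_apply' g]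
    simp only [Function.iterate_zero, id] at b
    linarith
  · have hφi : ∀ i, Continuous fun z => φ z i := fun i => (continuous_apply i).comp hφ
    ext j
    rw [eval_integral (fun j => cont_integrable _ (hφi j) _)]
    refine tendsto_nhds_unique (hint _ (hφi j)) ?_
    have := ((tendsto_pi_nhds.1 hv j).mono_left hU)
    refine this.congr' ?_
    filter_upwards [hU (hr.eventually_ge_atTop 1)] with i hi
    have : s i + 1 = r i := Nat.sub_add_cancel hi
    rw [this]
    simp [cocycle]

lemma map_eq_of_integral {Z : Type*} [MetricSpace Z] [CompactSpace Z] [MeasurableSpace Z]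
    [BorelSpace Z] (μ ν : Measure Z) [IsProbabilityMeasure μ] [IsProbabilityMeasure ν]
    (h : ∀ f : C(Z, ℝ), ∫ x, f x ∂μ = ∫ x, f x ∂ν) : μ = ν :=
  ext_of_forall_integral_eq_of_IsFiniteMeasure fun f => h f.toContinuousMap

lemma cond_inv {Z : Type*} [MeasurableSpace Z] (g : Z → Z)
    (μ : Measure Z) (hm : MeasurePreserving g μ μ) (A : Set Z)
    (hA : MeasurableSet A) (hi : g ⁻¹' A = A) :
    MeasurePreserving g (ProbabilityTheory.cond μ A) (ProbabilityTheory.cond μ A) := by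
  have := hm.restrict_preimage hA
  rw [hi] at this
  exact this.smul_measure _

lemma cond_integral {Z : Type*} [MeasurableSpace Z] (μ : Measure Z) {E : Type*}
    [NormedAddCommGroup E] [NormedSpace ℝ E] [IsProbabilityMeasure μ] (A : Set Z)
    (hA0 : μ A ≠ 0) (f : Z → E) :
    μ.real A • ∫ x, f x ∂(ProbabilityTheory.cond μ A) = ∫ x in A, f x ∂μ := by
  rw [ProbabilityTheory.cond, integral_smul_measure, smul_smul, ENNReal.toReal_inv,
    Measure.real, mul_inv_cancel₀, one_smul]
  exact (ENNReal.toReal_pos hA0 (measure_ne_top _ _)).ne'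

lemma exists_ergodic {Z : Type*} [MetricSpace Z] [CompactSpace Z] [MeasurableSpace Z]
    [BorelSpace Z] {k : ℕ} (g : Z → Z) (hg : Continuous g) (φ : Z → Fin k → ℝ)
    (hφ : Continuous φ) (v : Fin k → ℝ)
    (hv : v ∈ Set.extremePoints ℝ (convexHull ℝ (rotMZ g φ))) :
    ∃ μ : Measure Z, IsProbabilityMeasure μ ∧ Ergodic g μ ∧ (∫ z, φ z ∂μ) = v := by
  have hφi : ∀ i, Continuous fun z => φ z i := fun i => (continuous_apply i).comp hφ
  let N : Set (ProbabilityMeasure Z) := {μ | (∀ f : C(Z, ℝ), ∫ x, f (g x) ∂(μ : Measure Z) =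
    ∫ x, f x ∂(μ : Measure Z)) ∧ ∀ j, ∫ x, φ x j ∂(μ : Measure Z) = v j}
  have hcont : ∀ f : Z → ℝ, Continuous f →
      Continuous fun μ : ProbabilityMeasure Z => ∫ x, f x ∂(μ : Measure Z) := fun f hf =>
    ProbabilityMeasure.continuous_integral_continuousMap (⟨f, hf⟩ : C(Z, ℝ))
  have hNc : IsCompact N := by
    apply IsClosed.isCompact
    have : N = (⋂ f : C(Z, ℝ), {μ : ProbabilityMeasure Z | ∫ x, f (g x) ∂(μ : Measure Z) =
        ∫ x, f x ∂(μ : Measure Z)}) ∩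
        ⋂ j, {μ : ProbabilityMeasure Z | ∫ x, φ x j ∂(μ : Measure Z) = v j} := by
      ext μ; simp [N]
    rw [this]
    refine (isClosed_iInter fun f => isClosed_eq (hcont _ (f.continuous.comp hg))
      (hcont _ f.continuous)).inter (isClosed_iInter fun j => isClosed_eq (hcont _ (hφi j))
      continuous_const)
  have hmem : ∀ μ : Measure Z, ∀ h : IsProbabilityMeasure μ, MeasurePreserving g μ μ →
      ∫ z, φ z ∂μ = v → (⟨μ, h⟩ : ProbabilityMeasure Z) ∈ N := by
    intro μ h hm hmv
    refine ⟨fun f => integral_comp_iter g f f.continuous μ hm 1, fun j => ?_⟩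
    rw [← hmv, eval_integral (fun j => cont_integrable _ (hφi j) _)]
    rfl
  let Φ : ProbabilityMeasure Z → (C(Z, ℝ) → ℝ) := fun μ f => ∫ x, f x ∂(μ : Measure Z)
  have hΦ : Continuous Φ := continuous_pi fun f => hcont _ f.continuous
  have hne : (Φ '' N).Nonempty := by
    obtain ⟨μ, h, hm, hmv⟩ := rotMZ_subset g hg φ hφ (extremePoints_convexHull_subset hv)
    exact ⟨_, _, hmem μ h hm hmv, rfl⟩
  obtain ⟨_, hext⟩ := (hNc.image hΦ).extremePoints_nonempty hne
  obtain ⟨⟨μ, hμN, rfl⟩, hE⟩ := mem_extremePoints.1 hext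
  have hm : MeasurePreserving g (μ : Measure Z) μ := by
    refine ⟨hg.measurable, ?_⟩
    have : IsProbabilityMeasure (Measure.map g (μ : Measure Z)) :=
      Measure.isProbabilityMeasure_map hg.measurable.aemeasurable
    apply map_eq_of_integral
    intro f
    rw [integral_map hg.measurable.aemeasurable f.continuous.aestronglyMeasurable]
    exact hμN.1 f
  have hmv : ∫ z, φ z ∂(μ : Measure Z) = v := by
    ext j
    rw [eval_integral (fun j => cont_integrable _ (hφi j) _)]
    exact hμN.2 j
  refine ⟨μ, inferInstance, ⟨hm, ⟨fun A hA hi => ?_⟩⟩, hmv⟩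
  by_contra hcon
  rw [eventuallyConst_set] at hcon
  push Not at hcon
  have hA0 : (μ : Measure Z) A ≠ 0 := fun h => hcon.2 (measure_eq_zero_iff_ae_notMem.1 h)
  have hA1 : (μ : Measure Z) Aᶜ ≠ 0 := fun h => hcon.1 (by
    simpa using measure_eq_zero_iff_ae_notMem.1 h)
  have hic : g ⁻¹' Aᶜ = Aᶜ := by rw [Set.preimage_compl, hi]
  set μ₁ := ProbabilityTheory.cond (μ : Measure Z) A with hμ₁
  set μ₂ := ProbabilityTheory.cond (μ : Measure Z) Aᶜ with hμ₂
  have p1 : IsProbabilityMeasure μ₁ := ProbabilityTheory.cond_isProbabilityMeasure hA0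
  have p2 : IsProbabilityMeasure μ₂ := ProbabilityTheory.cond_isProbabilityMeasure hA1
  have m1 : MeasurePreserving g μ₁ μ₁ := cond_inv g μ hm A hA hi
  have m2 : MeasurePreserving g μ₂ μ₂ := cond_inv g μ hm Aᶜ hA.compl hic
  set a := (μ : Measure Z).real A with ha
  set b := (μ : Measure Z).real Aᶜ with hb
  have ha0 : 0 < a := ENNReal.toReal_pos hA0 (measure_ne_top _ _)
  have hb0 : 0 < b := ENNReal.toReal_pos hA1 (measure_ne_top _ _)
  have hab : a + b = 1 := by
    rw [ha, hb, probReal_compl_eq_one_sub hA]; ring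
  have hdec : ∀ {E : Type} [NormedAddCommGroup E] [NormedSpace ℝ E] (f : Z → E),
      Continuous f → a • ∫ x, f x ∂μ₁ + b • ∫ x, f x ∂μ₂ = ∫ x, f x ∂(μ : Measure Z) := by
    intro E _ _ f hf
    rw [cond_integral _ _ hA0, cond_integral _ _ hA1]
    exact integral_add_compl hA (cont_integrable f hf _)
  obtain ⟨-, hvE⟩ := mem_extremePoints.1 hv
  obtain ⟨v1, v2⟩ := hvE _ (rotM_subset g hg φ hφ ⟨μ₁, p1, m1, rfl⟩)
    _ (rotM_subset g hg φ hφ ⟨μ₂, p2, m2, rfl⟩) ⟨a, b, ha0, hb0, hab, by rw [hdec φ hφ, hmv]⟩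
  obtain ⟨e1, -⟩ := hE _ ⟨_, hmem μ₁ p1 m1 v1, rfl⟩ _ ⟨_, hmem μ₂ p2 m2 v2, rfl⟩
    ⟨a, b, ha0, hb0, hab, by
      ext f
      exact hdec f f.continuous⟩
  have e2 : μ₁ = (μ : Measure Z) := map_eq_of_integral _ _ fun f => congrFun e1 f
  have e3 : μ₁ Aᶜ = 0 := by
    rw [hμ₁, ProbabilityTheory.cond_apply hA]
    simp
  rw [e2] at e3
  exact hA1 e3

/-- Let `Z` be a compact metric space, `g : Z → Z` continuous and
`φ : Z → ℝ^k` continuous. Every extreme point `v` of the convex hull of the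
Misiurewicz–Ziemian rotation set is the rotation vector of some ergodic `g`-invariant
Borel probability measure; in particular some recurrent point of `g` has Birkhoff
average equal to `v`. -/
theorem stmt0 {Z : Type*} [MetricSpace Z] [CompactSpace Z] [MeasurableSpace Z] [BorelSpace Z]
    {k : ℕ} (g : Z → Z) (hg : Continuous g) (φ : Z → Fin k → ℝ) (hφ : Continuous φ)
    (v : Fin k → ℝ) (hv : v ∈ Set.extremePoints ℝ (convexHull ℝ (rotMZ g φ))) :
    (∃ μ : Measure Z, IsProbabilityMeasure μ ∧ Ergodic g μ ∧ (∫ z, φ z ∂μ) = v) ∧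
      ∃ z ∈ RecSet g, hasAvg g φ z v := by

  obtain ⟨μ, hμ, he, hi⟩ := exists_ergodic g hg φ hφ v hv
  refine ⟨⟨μ, hμ, he, hi⟩, ?_⟩
  rw [← hi]
  exact rec_and_avg g φ hφ μ he
end

section
/- Let Z be a compact metric space, g : Z → Z a continuous map, and φ : Z → ℝ^k a continuous function. Let R(g) denote the set of recurrent points of g, i.e. points z ∈ Z with g^{r_i}(z) → z for some sequence r_i → ∞. Then the convex hull of {φ̂(z) : z ∈ R(g), φ̂(z) exists} equals the convex hull of rot_MZ(Z,g,φ). Moreover, if W is a g-invariant subset of Z containing R(g) such that the set {φ̂(z) : z ∈ W, φ̂(z) exists} is convex, then {φ̂(z) : z ∈ W, φ̂(z) exists} = rot_MZ(Z,g,φ). -/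
open Filter Topology MeasureTheory

theorem aux_zero_mem (n : ℕ) : ∀ {E : Type} [NormedAddCommGroup E] [NormedSpace ℝ E]
    [FiniteDimensional ℝ E] {Ω : Type*} [MeasurableSpace Ω] (μ : Measure Ω)
    [IsProbabilityMeasure μ] (f : Ω → E) (C : Set E), Module.finrank ℝ E = n → Convex ℝ C →
    Integrable f μ → (∀ᵐ x ∂μ, f x ∈ C) → ∫ x, f x ∂μ = 0 → (0 : E) ∈ C := by
  induction n using Nat.strong_induction_on with
  | _ n ih =>
  intro E _ _ _ Ω _ μ _ f C hn hC hf hfC hint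
  by_contra h0
  have key : ∃ l : E →L[ℝ] ℝ, l ≠ 0 ∧ ∀ᵐ x ∂μ, l (f x) = 0 := by
    by_cases hne : (interior C).Nonempty
    · obtain ⟨l, hl, hl2⟩ := geometric_hahn_banach_of_nonempty_interior_point hC
        (x := (0:E)) (fun h => h0 (interior_subset h)) hne
      refine ⟨l, hl, ?_⟩
      have h1 : ∫ x, -l (f x) ∂μ = 0 := by
        rw [integral_neg, ContinuousLinearMap.integral_comp_comm l hf, hint]; simp
      have h2 : 0 ≤ᵐ[μ] fun x => -l (f x) := by
        filter_upwards [hfC] with x hx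
        have := hl2 _ hx
        simp at this ⊢
        exact this
      have h3 := (integral_eq_zero_iff_of_nonneg_ae h2 (l.integrable_comp hf).neg).1 h1
      filter_upwards [h3] with x hx
      simpa using hx
    · rw [hC.interior_nonempty_iff_affineSpan_eq_top] at hne
      obtain ⟨c, hc⟩ : C.Nonempty := by
        obtain ⟨x, hx⟩ := hfC.exists
        exact ⟨_, hx⟩
      have hdir : (affineSpan ℝ C).direction < ⊤ := by
        rw [lt_top_iff_ne_top]
        intro h
        apply hne
        exact (AffineSubspace.direction_eq_top_iff_of_nonempty ⟨c, subset_affineSpan ℝ C hc⟩).1 h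
      obtain ⟨l, hl, hl2⟩ := Submodule.exists_le_ker_of_lt_top _ hdir
      let L : E →L[ℝ] ℝ := LinearMap.toContinuousLinearMap l
      have hL : ∀ᵐ x ∂μ, L (f x) = L c := by
        filter_upwards [hfC] with x hx
        have : f x -ᵥ c ∈ (affineSpan ℝ C).direction :=
          AffineSubspace.vsub_mem_direction (subset_affineSpan ℝ C hx) (subset_affineSpan ℝ C hc)
        have := hl2 this
        simp only [vsub_eq_sub, LinearMap.mem_ker, map_sub, sub_eq_zero] at this
        exact this
      have hc0 : L c = 0 := by
        have h1 := ContinuousLinearMap.integral_comp_comm L hf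
        rw [integral_congr_ae hL, hint] at h1
        simpa using h1
      refine ⟨L, ?_, by simpa [hc0] using hL⟩
      intro h
      apply hl
      ext x
      exact DFunLike.congr_fun h x
  obtain ⟨l, hl, hlf⟩ := key
  let K : Submodule ℝ E := LinearMap.ker (l : E →ₗ[ℝ] ℝ)
  obtain ⟨P, hP⟩ := K.subtype.exists_leftInverse_of_injective (by simp)
  let Q : E →L[ℝ] K := LinearMap.toContinuousLinearMap P
  have hQ : ∀ x (hx : x ∈ K), Q x = ⟨x, hx⟩ := fun x hx => by
    exact DFunLike.congr_fun hP ⟨x, hx⟩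
  have hlt : Module.finrank ℝ K < n := by
    rw [← hn]
    apply Submodule.finrank_lt
    intro h
    apply hl
    ext x
    have : x ∈ K := h ▸ Submodule.mem_top
    simpa [K] using this
  have := ih _ hlt μ (fun x => Q (f x)) (K.subtype ⁻¹' C) rfl (hC.linear_preimage _)
    (Q.integrable_comp hf) (by
      filter_upwards [hlf, hfC] with x hx hx2
      rw [hQ (f x) (by simpa [K] using hx)]
      simpa using hx2) (by rw [ContinuousLinearMap.integral_comp_comm Q hf, hint]; simp)
  exact h0 (by simpa using this)

theorem aux_integral_mem {k : ℕ} {Ω : Type*} [MeasurableSpace Ω] (μ : Measure Ω)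
    [IsProbabilityMeasure μ] (f : Ω → Fin k → ℝ) (C : Set (Fin k → ℝ)) (hC : Convex ℝ C)
    (hf : Integrable f μ) (hfC : ∀ᵐ x ∂μ, f x ∈ C) : ∫ x, f x ∂μ ∈ C := by
  have := aux_zero_mem _ μ (fun x => f x - ∫ y, f y ∂μ)
    ((fun w => w + ∫ y, f y ∂μ) ⁻¹' C) rfl (hC.translate_preimage_left _)
    (hf.sub (integrable_const _)) (by simpa using hfC)
    (by rw [integral_sub hf (integrable_const _)]; simp)
  simpa using this

noncomputable def auxM {Ω : Type*} (T : Ω → Ω) (f : Ω → ℝ) : ℕ → Ω → ℝ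
  | 0 => fun _ => 0
  | n + 1 => fun x => max (f x + auxM T f n (T x)) 0

theorem auxM_nonneg {Ω : Type*} (T : Ω → Ω) (f : Ω → ℝ) (n : ℕ) (x : Ω) : 0 ≤ auxM T f n x := by
  cases n <;> simp [auxM]

theorem auxM_mono {Ω : Type*} (T : Ω → Ω) (f : Ω → ℝ) (n : ℕ) : ∀ x : Ω,
    auxM T f n x ≤ auxM T f (n+1) x := by
  induction n with
  | zero => intro x; simp [auxM]
  | succ n ih =>
    intro x
    rw [auxM, auxM]
    have := ih (T x)
    exact max_le_max (by linarith) le_rfl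

theorem auxM_ge {Ω : Type*} (T : Ω → Ω) (f : Ω → ℝ) (n : ℕ) : ∀ x : Ω,
    birkhoffSum T f n x ≤ auxM T f n x := by
  induction n with
  | zero => intro x; simp [auxM]
  | succ n ih =>
    intro x
    rw [birkhoffSum_succ', auxM]
    exact le_max_of_le_left (by linarith [ih (T x)])

theorem auxM_int {Ω : Type*} [MeasurableSpace Ω] {μ : Measure Ω} [IsFiniteMeasure μ] {T : Ω → Ω}
    (hT : MeasurePreserving T μ μ) {f : Ω → ℝ} (hf : Integrable f μ) (n : ℕ) :
    Integrable (auxM T f n) μ := by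
  induction n with
  | zero => simp [auxM]
  | succ n ih =>
    have : Integrable (fun x => auxM T f n (T x)) μ := hT.integrable_comp_of_integrable ih
    exact (hf.add this).sup (integrable_zero _ _ _)

theorem auxM_meas {Ω : Type*} [MeasurableSpace Ω] {T : Ω → Ω}
    (hT : Measurable T) {f : Ω → ℝ} (hf : Measurable f) (n : ℕ) :
    Measurable (auxM T f n) := by
  induction n with
  | zero => simp [auxM]
  | succ n ih =>
    exact (hf.add (ih.comp hT)).max measurable_const

theorem aux_maximal {Ω : Type*} [MeasurableSpace Ω] {μ : Measure Ω} [IsFiniteMeasure μ] {T : Ω → Ω}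
    (hT : MeasurePreserving T μ μ) {f : Ω → ℝ} (hfm : Measurable f) (hf : Integrable f μ)
    (hpos : ∀ᵐ x ∂μ, ∃ n, 0 < birkhoffSum T f n x) : 0 ≤ ∫ x, f x ∂μ := by
  let P : ℕ → Set Ω := fun n => {x | 0 < auxM T f n x}
  have hPm : ∀ n, MeasurableSet (P n) := fun n =>
    measurableSet_lt measurable_const (auxM_meas hT.measurable hfm n)
  have h1 : ∀ n, 0 ≤ ∫ x, (P n).indicator f x ∂μ := by
    intro n
    have hc : Integrable (fun x => auxM T f n (T x)) μ :=
      hT.integrable_comp_of_integrable (auxM_int hT hf n)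
    have h2 : ∫ x, (auxM T f n x - auxM T f n (T x)) ∂μ = 0 := by
      rw [integral_sub (auxM_int hT hf n) hc]
      have h3 : ∫ x, auxM T f n x ∂μ = ∫ x, auxM T f n (T x) ∂μ := by
        conv_lhs => rw [← hT.map_eq]
        rw [integral_map hT.measurable.aemeasurable]
        exact (auxM_meas hT.measurable hfm n).aestronglyMeasurable
      rw [h3, sub_self]
    rw [← h2]
    apply integral_mono ((auxM_int hT hf n).sub hc) (hf.indicator (hPm n))
    intro x
    simp only [Pi.sub_apply]
    by_cases hx : x ∈ P n
    · rw [Set.indicator_of_mem hx]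
      cases n with
      | zero => simp [P, auxM] at hx
      | succ n =>
        have hx' : 0 < auxM T f (n+1) x := hx
        have := auxM_mono T f n (T x)
        have h4 : auxM T f (n+1) x = f x + auxM T f n (T x) := by
          rw [auxM] at hx' ⊢
          rcases lt_max_iff.1 hx' with h | h
          · exact max_eq_left h.le
          · exact absurd h (lt_irrefl _)
        linarith
    · rw [Set.indicator_of_notMem hx]
      have hx' : ¬ 0 < auxM T f n x := hx
      have := auxM_nonneg T f n (T x)
      linarith
  have h2 : Tendsto (fun n => ∫ x, (P n).indicator f x ∂μ) atTop (𝓝 (∫ x, f x ∂μ)) := by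
    apply tendsto_integral_of_dominated_convergence (fun x => ‖f x‖)
    · intro n; exact (hf.indicator (hPm n)).aestronglyMeasurable
    · exact hf.norm
    · intro n; exact Eventually.of_forall fun x => norm_indicator_le_norm_self _ _
    · filter_upwards [hpos] with x ⟨n, hn⟩
      apply tendsto_const_nhds.congr'
      filter_upwards [eventually_ge_atTop n] with m hm
      rw [Set.indicator_of_mem]
      exact lt_of_lt_of_le (hn.trans_le (auxM_ge T f n x))
        (monotone_nat_of_le_succ (f := fun n => auxM T f n x) (fun n => auxM_mono T f n x) hm)
  exact ge_of_tendsto' h2 h1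

theorem aux_freq {u v : ℕ → ℝ} (h : Tendsto (fun n => v n - u n) atTop (𝓝 0)) {a : ℝ}
    (hu : ∀ c : ℚ, (c:ℝ) < a → ∃ᶠ n in atTop, (c:ℝ) < u n) :
    ∀ c : ℚ, (c:ℝ) < a → ∃ᶠ n in atTop, (c:ℝ) < v n := by
  intro c hc
  obtain ⟨d, hd, hd2⟩ := exists_rat_btwn hc
  have h1 : ∀ᶠ n in atTop, -((d:ℝ) - c) < v n - u n :=
    h.eventually (lt_mem_nhds (by linarith))
  refine ((hu d hd2).and_eventually h1).mono ?_
  rintro n ⟨h2, h3⟩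
  linarith

theorem aux_freq_meas {Ω : Type*} [MeasurableSpace Ω] {u : ℕ → Ω → ℝ} (hu : ∀ n, Measurable (u n))
    (a : ℝ) : MeasurableSet {x | ∀ c : ℚ, (c:ℝ) < a → ∃ᶠ n in atTop, (c:ℝ) < u n x} := by
  simp only [frequently_atTop, Set.ofPred_forall, Set.ofPred_exists, Set.ofPred_and]
  refine MeasurableSet.iInter fun c => MeasurableSet.iInter fun _ => MeasurableSet.iInter fun m =>
    MeasurableSet.iUnion fun n => ?_
  exact (MeasurableSet.const _).inter (measurableSet_lt measurable_const (hu n))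

theorem aux_gap {Ω : Type*} [MeasurableSpace Ω] {μ : Measure Ω} [IsFiniteMeasure μ] {T : Ω → Ω}
    (hT : MeasurePreserving T μ μ) {f : Ω → ℝ} (hfm : Measurable f) {B : ℝ} (hB : ∀ x, |f x| ≤ B)
    {b : ℝ} {E : Set Ω} (hE : MeasurableSet E) (hTE : T ⁻¹' E = E)
    (h : ∀ x ∈ E, ∃ᶠ n in atTop, b < birkhoffAverage ℝ T f n x) :
    b * μ.real E ≤ ∫ x in E, f x ∂μ := by
  have hT' : MeasurePreserving T (μ.restrict E) (μ.restrict E) := by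
    have := hT.restrict_preimage hE
    rwa [hTE] at this
  have hf : Integrable f (μ.restrict E) :=
    Integrable.of_bound hfm.aestronglyMeasurable B (Eventually.of_forall hB)
  have := aux_maximal hT' (f := fun x => f x - b) (hfm.sub_const b)
    (hf.sub (integrable_const b)) (by
      rw [ae_restrict_iff' hE]
      refine Eventually.of_forall fun x hx => ?_
      obtain ⟨n, hn, hn0⟩ := ((h x hx).and_eventually (eventually_gt_atTop 0)).exists
      refine ⟨n, ?_⟩
      have hn0' : (0:ℝ) < n := by exact_mod_cast hn0
      rw [birkhoffAverage, smul_eq_mul, lt_inv_mul_iff₀ hn0'] at hn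
      simp only [birkhoffSum, Finset.sum_sub_distrib, Finset.sum_const, Finset.card_range,
        nsmul_eq_mul] at hn ⊢
      linarith)
  rw [integral_sub hf (integrable_const b)] at this
  simp at this
  linarith

theorem aux_avg_bdd {Ω : Type*} {T : Ω → Ω} {f : Ω → ℝ} {B : ℝ} (hB : ∀ x, |f x| ≤ B) (n : ℕ)
    (x : Ω) : |birkhoffAverage ℝ T f n x| ≤ B := by
  have hB0 : 0 ≤ B := (abs_nonneg _).trans (hB x)
  rcases Nat.eq_zero_or_pos n with rfl | hn
  · simpa using hB0
  have hn0' : (0:ℝ) < n := by exact_mod_cast hn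
  rw [birkhoffAverage, smul_eq_mul, abs_mul, abs_inv, abs_of_pos hn0', inv_mul_le_iff₀ hn0']
  calc |birkhoffSum T f n x| ≤ ∑ i ∈ Finset.range n, |f (T^[i] x)| := Finset.abs_sum_le_sum_abs _ _
    _ ≤ ∑ i ∈ Finset.range n, B := Finset.sum_le_sum fun i _ => hB _
    _ = n * B := by simp

theorem aux_avg_meas {Ω : Type*} [MeasurableSpace Ω] {T : Ω → Ω} (hT : Measurable T)
    {f : Ω → ℝ} (hf : Measurable f) (n : ℕ) : Measurable (birkhoffAverage ℝ T f n) := by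
  unfold birkhoffAverage birkhoffSum
  have : ∀ i, Measurable fun x => f (T^[i] x) := fun i => hf.comp (hT.iterate i)
  fun_prop

theorem aux_birkhoff {Ω : Type*} [MeasurableSpace Ω] {μ : Measure Ω} [IsFiniteMeasure μ]
    {T : Ω → Ω} (hT : MeasurePreserving T μ μ) {f : Ω → ℝ} (hfm : Measurable f) {B : ℝ}
    (hB : ∀ x, |f x| ≤ B) :
    ∀ᵐ x ∂μ, ∃ l, Tendsto (fun n => birkhoffAverage ℝ T f n x) atTop (𝓝 l) := by
  have key : ∀ a b : ℚ, a < b → ∀ᵐ x ∂μ, ¬ ((∃ᶠ n in atTop, birkhoffAverage ℝ T f n x < a) ∧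
      ∃ᶠ n in atTop, b < birkhoffAverage ℝ T f n x) := by
    intro a b hab
    let E1 : (Ω → ℝ) → ℝ → Set Ω := fun f b => {x | ∀ c : ℚ, (c:ℝ) < b →
      ∃ᶠ n in atTop, (c:ℝ) < birkhoffAverage ℝ T f n x}
    have hE1 : ∀ f b, Measurable f → MeasurableSet (E1 f b) := fun f b hf =>
      aux_freq_meas (aux_avg_meas hT.measurable hf) b
    have hE2 : ∀ f b, (∀ x, |f x| ≤ B) → T ⁻¹' (E1 f b) = E1 f b := by
      intro f b hf
      have hbd : Bornology.IsBounded (Set.range f) := by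
        rw [isBounded_iff_forall_norm_le]
        exact ⟨B, by rintro _ ⟨x, rfl⟩; exact hf x⟩
      have ht := fun x => tendsto_birkhoffAverage_apply_sub_birkhoffAverage' (𝕜 := ℝ) hbd T x
      ext x
      constructor
      · intro h
        refine aux_freq ?_ h
        simpa using (ht x).neg
      · intro h
        exact aux_freq (ht x) h
    have hB' : ∀ x, |(-f) x| ≤ B := by simpa using hB
    let E := E1 f b ∩ E1 (-f) (-a)
    have hE : MeasurableSet E := (hE1 _ _ hfm).inter (hE1 _ _ hfm.neg)
    have hTE : T ⁻¹' E = E := by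
      rw [Set.preimage_inter, hE2 _ _ hB, hE2 _ _ hB']
    obtain ⟨c, hac, hcb⟩ := exists_between hab
    obtain ⟨d, hcd, hdb⟩ := exists_between hcb
    have i1 := aux_gap hT hfm hB hE hTE (b := d) (fun x hx => hx.1 d (by exact_mod_cast hdb))
    have i2 := aux_gap hT hfm.neg hB' hE hTE (b := (-c : ℚ))
      (fun x hx => hx.2 (-c) (by push_cast; exact neg_lt_neg (by exact_mod_cast hac)))
    simp only [Pi.neg_apply, integral_neg] at i2
    push_cast at i2
    have hcd' : (c:ℝ) < d := by exact_mod_cast hcd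
    have hz : μ.real E = 0 := by
      have := measureReal_nonneg (μ := μ) (s := E)
      nlinarith
    rw [measureReal_eq_zero_iff] at hz
    have hz2 := measure_eq_zero_iff_ae_notMem.1 hz
    filter_upwards [hz2] with x hx
    rintro ⟨h1, h2⟩
    apply hx
    constructor
    · intro c hc
      exact h2.mono fun n hn => hc.trans hn
    · intro c hc
      refine h1.mono fun n hn => ?_
      rw [birkhoffAverage_neg]
      simp only [Pi.neg_apply]
      linarith
  have key2 : ∀ᵐ x ∂μ, ∀ a b : ℚ, a < b →
      ¬ ((∃ᶠ n in atTop, birkhoffAverage ℝ T f n x < a) ∧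
      ∃ᶠ n in atTop, b < birkhoffAverage ℝ T f n x) := by
    rw [ae_all_iff]; intro a
    rw [ae_all_iff]; intro b
    by_cases h : a < b
    · filter_upwards [key a b h] with x hx _ using hx
    · exact Eventually.of_forall fun x h' => absurd h' h
  filter_upwards [key2] with x hx
  refine tendsto_of_no_upcrossings (s := Set.range ((↑) : ℚ → ℝ)) Rat.denseRange_cast ?_
    (isBoundedUnder_of ⟨B, fun n => (abs_le.1 (aux_avg_bdd hB n x)).2⟩)
    (isBoundedUnder_of ⟨-B, fun n => (abs_le.1 (aux_avg_bdd hB n x)).1⟩)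
  rintro _ ⟨a, rfl⟩ _ ⟨b, rfl⟩ hab
  exact hx a b (by exact_mod_cast hab)

theorem aux_emp {Z : Type*} [MetricSpace Z] [CompactSpace Z] [MeasurableSpace Z] [BorelSpace Z]
    (g : Z → Z) (z : Z) (r : ℕ) : ∃ P : ProbabilityMeasure Z, r ≠ 0 → ∀ f : Z → ℝ, Continuous f →
      ∫ x, f x ∂(P : Measure Z) = (r:ℝ)⁻¹ * ∑ i ∈ Finset.range r, f (g^[i] z) := by
  by_cases hr : r = 0
  · exact ⟨⟨Measure.dirac z, inferInstance⟩, fun h => absurd hr h⟩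
  refine ⟨⟨(r : ENNReal)⁻¹ • ∑ i ∈ Finset.range r, Measure.dirac (g^[i] z), ⟨?_⟩⟩, fun _ f hf => ?_⟩
  · simp
    exact ENNReal.inv_mul_cancel (by simpa using hr) (by simp)
  · simp only [ProbabilityMeasure.coe_mk]
    rw [integral_smul_measure, integral_finsetSum_measure]
    · simp
    · intro i _
      exact integrable_dirac (by simp)

theorem aux_KB {Z : Type*} [MetricSpace Z] [CompactSpace Z] [MeasurableSpace Z] [BorelSpace Z]
    {k : ℕ} (g : Z → Z) (hg : Continuous g) (φ : Z → Fin k → ℝ) (hφ : Continuous φ)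
    (v : Fin k → ℝ) (hv : v ∈ rotMZ g φ) :
    ∃ μ : Measure Z, IsProbabilityMeasure μ ∧ MeasurePreserving g μ μ ∧ ∫ x, φ x ∂μ = v := by
  obtain ⟨z, r, hr, hlim⟩ := hv
  choose P hP using fun i => aux_emp g (z i) (r i)
  let U : Ultrafilter ℕ := hyperfilter ℕ
  have hU : (U : Filter ℕ) ≤ atTop := Nat.hyperfilter_le_atTop
  obtain ⟨μ, -, hμ⟩ := isCompact_univ.ultrafilter_le_nhds (U.map P) (by simp)
  have hμ' : Tendsto P U (𝓝 μ) := hμ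
  rw [ProbabilityMeasure.tendsto_iff_forall_integral_tendsto] at hμ'
  have hr0 : ∀ᶠ i in (U : Filter ℕ), r i ≠ 0 :=
    hU ((hr.eventually_gt_atTop 0).mono fun i hi => hi.ne')
  have hT : ∀ f : Z → ℝ, Continuous f → Tendsto
      (fun i => (r i:ℝ)⁻¹ * ∑ j ∈ Finset.range (r i), f (g^[j] (z i))) U
      (𝓝 (∫ x, f x ∂(μ : Measure Z))) := by
    intro f hf
    have := hμ' (BoundedContinuousFunction.mkOfCompact ⟨f, hf⟩)
    simp only [BoundedContinuousFunction.mkOfCompact_apply, ContinuousMap.coe_mk] at this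
    refine this.congr' ?_
    filter_upwards [hr0] with i hi using hP i hi f hf
  refine ⟨μ, inferInstance, ⟨hg.measurable, ?_⟩, ?_⟩
  · have : IsProbabilityMeasure (Measure.map g (μ : Measure Z)) :=
      Measure.isProbabilityMeasure_map hg.measurable.aemeasurable
    apply ext_of_forall_integral_eq_of_IsFiniteMeasure
    intro f
    rw [integral_map hg.measurable.aemeasurable f.continuous.aestronglyMeasurable]
    have h1 := (hT _ (f.continuous.comp hg)).sub (hT _ f.continuous)
    have h2 : Tendsto (fun i => (r i:ℝ)⁻¹ * (f (g^[r i] (z i)) - f (z i))) U (𝓝 0) := by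
      have h3 : Tendsto (fun i => (r i:ℝ)⁻¹ * (2 * ‖f‖)) U (𝓝 0) := by
        have := ((tendsto_inv_atTop_zero.comp
          (tendsto_natCast_atTop_atTop (R := ℝ))).comp hr).mul_const (2 * ‖f‖)
        rw [zero_mul] at this
        exact this.mono_left hU
      refine squeeze_zero_norm (fun i => ?_) h3
      rw [norm_mul, norm_inv, Real.norm_natCast]
      gcongr
      have a1 := f.norm_coe_le_norm (g^[r i] (z i))
      have a2 := f.norm_coe_le_norm (z i)
      have := norm_sub_le (f (g^[r i] (z i))) (f (z i))
      linarith
    have h4 := tendsto_nhds_unique h2 (h1.congr fun i => by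
      rw [← mul_sub, ← Finset.sum_sub_distrib]
      simp only [Function.comp_apply, ← Function.iterate_succ_apply' g]
      rw [Finset.sum_range_sub (fun j => f (g^[j] (z i)))]
      simp)
    simp only [Function.comp_apply] at h4
    linarith
  · have hi : Integrable φ (μ : Measure Z) := by
      exact hφ.integrable_of_hasCompactSupport (HasCompactSupport.of_compactSpace _)
    ext j
    have e : (∫ x, φ x ∂(μ : Measure Z)) j = ∫ x, φ x j ∂(μ : Measure Z) :=
      (ContinuousLinearMap.integral_comp_comm
        (ContinuousLinearMap.proj (R := ℝ) (φ := fun _ : Fin k => ℝ) j) hi).symm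
    rw [e]
    refine tendsto_nhds_unique (hT _ ((continuous_apply j).comp hφ)) ?_
    have := ((tendsto_pi_nhds.1 hlim) j).mono_left hU
    refine this.congr fun i => ?_
    simp [cocycle, Finset.sum_apply]

theorem aux_main {Z : Type*} [MetricSpace Z] [CompactSpace Z]
    {k : ℕ} (g : Z → Z) (hg : Continuous g) (φ : Z → Fin k → ℝ) (hφ : Continuous φ) :
    rotMZ g φ ⊆ convexHull ℝ (rotPOn g φ (RecSet g)) := by
  intro v hv
  let _ : MeasurableSpace Z := borel Z
  have : BorelSpace Z := ⟨rfl⟩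
  obtain ⟨μ, _, hT, hint⟩ := aux_KB g hg φ hφ v hv
  have hrec : ∀ᵐ x ∂μ, x ∈ RecSet g := by
    filter_upwards [hT.conservative.ae_frequently_mem_of_mem_nhds] with x hx
    have hc : MapClusterPt x atTop (fun n => g^[n] x) := by
      rw [mapClusterPt_iff_frequently]
      exact hx
    obtain ⟨ψ, h1, h2⟩ := MapClusterPt.tendsto_subseq hc
    exact ⟨ψ, h1.tendsto_atTop, h2⟩
  obtain ⟨B, hB⟩ : ∃ B, ∀ x, ‖φ x‖ ≤ B := by
    obtain ⟨B, hB⟩ := isCompact_univ.exists_bound_of_continuousOn hφ.continuousOn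
    exact ⟨B, fun x => hB x trivial⟩
  have hcoc : ∀ (z : Z) (n : ℕ) (j : Fin k), ((n:ℝ)⁻¹ • cocycle g φ z n) j =
      birkhoffAverage ℝ g (fun x => φ x j) n z := by
    intro z n j
    simp [cocycle, birkhoffAverage, birkhoffSum, Finset.sum_apply]
  have hBj : ∀ j x, |φ x j| ≤ B := fun j x => (norm_le_pi_norm (φ x) j).trans (hB x)
  have hav : ∀ᵐ x ∂μ, ∃ w, hasAvg g φ x w := by
    have : ∀ᵐ x ∂μ, ∀ j, ∃ l, Tendsto (fun n => birkhoffAverage ℝ g (fun x => φ x j) n x)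
        atTop (𝓝 l) := by
      rw [ae_all_iff]
      intro j
      exact aux_birkhoff hT ((continuous_apply j).comp hφ).measurable (hBj j)
    filter_upwards [this] with x hx
    choose w hw using hx
    refine ⟨w, ?_⟩
    rw [hasAvg, tendsto_pi_nhds]
    intro j
    simpa only [hcoc] using hw j
  classical
  let F : Z → Fin k → ℝ := fun x => if h : ∃ w, hasAvg g φ x w then h.choose else 0
  have hF : ∀ᵐ x ∂μ, hasAvg g φ x (F x) := by
    filter_upwards [hav] with x hx
    simp only [F, dif_pos hx]
    exact hx.choose_spec
  have hcont : ∀ n : ℕ, Continuous fun x => (n:ℝ)⁻¹ • cocycle g φ x n := by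
    intro n
    unfold cocycle
    have : ∀ i, Continuous fun x => φ (g^[i] x) := fun i => hφ.comp (hg.iterate i)
    fun_prop
  have hbound : ∀ (n : ℕ) x, ‖(n:ℝ)⁻¹ • cocycle g φ x n‖ ≤ B := by
    intro n x
    rw [pi_norm_le_iff_of_nonneg ((norm_nonneg _).trans (hB x))]
    intro j
    rw [hcoc]
    exact aux_avg_bdd (hBj j) n x
  have hFm : AEStronglyMeasurable F μ := aestronglyMeasurable_of_tendsto_ae atTop
    (fun n => (hcont n).aestronglyMeasurable) hF
  have hFi : Integrable F μ := Integrable.of_bound hFm B (by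
    filter_upwards [hF] with x hx
    exact le_of_tendsto' hx.norm fun n => hbound n x)
  have hlim := tendsto_integral_of_dominated_convergence (fun _ => B)
    (fun n => (hcont n).aestronglyMeasurable) (integrable_const B)
    (fun n => Eventually.of_forall (hbound n)) hF
  have hi : ∀ f : Z → Fin k → ℝ, Continuous f → Integrable f μ := fun f hf =>
    hf.integrable_of_hasCompactSupport (HasCompactSupport.of_compactSpace _)
  have hconst : ∀ n : ℕ, n ≠ 0 → ∫ x, (n:ℝ)⁻¹ • cocycle g φ x n ∂μ = v := by
    intro n hn
    unfold cocycle
    rw [integral_smul, integral_finsetSum _ fun i _ => hi (fun x => φ (g^[i] x)) (hφ.comp (hg.iterate i))]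
    have : ∀ i, ∫ x, φ (g^[i] x) ∂μ = v := by
      intro i
      have h := (hT.iterate i).map_eq
      rw [← hint]
      conv_rhs => rw [← h]
      rw [integral_map (hT.iterate i).measurable.aemeasurable hφ.aestronglyMeasurable]
    simp only [this, Finset.sum_const, Finset.card_range]
    rw [← Nat.cast_smul_eq_nsmul ℝ, smul_smul, inv_mul_cancel₀ (by exact_mod_cast hn), one_smul]
  have hFv : ∫ x, F x ∂μ = v := by
    refine tendsto_nhds_unique hlim (tendsto_const_nhds.congr' ?_)
    filter_upwards [eventually_ne_atTop 0] with n hn using (hconst n hn).symm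
  rw [← hFv]
  apply aux_integral_mem μ F _ (convex_convexHull ℝ _) hFi
  filter_upwards [hF, hrec] with x h1 h2
  exact subset_convexHull ℝ _ ⟨x, h2, h1⟩

theorem aux_sub {Z : Type*} {k : ℕ} (g : Z → Z) (φ : Z → Fin k → ℝ) (W : Set Z) :
    rotPOn g φ W ⊆ rotMZ g φ := by
  rintro v ⟨z, -, hz⟩
  exact ⟨fun _ => z, id, tendsto_id, hz⟩

theorem stmt2 {Z : Type*} [MetricSpace Z] [CompactSpace Z]
    {k : ℕ} (g : Z → Z) (hg : Continuous g) (φ : Z → Fin k → ℝ) (hφ : Continuous φ) :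
    convexHull ℝ (rotPOn g φ (RecSet g)) = convexHull ℝ (rotMZ g φ) ∧
    ∀ W : Set Z, Set.MapsTo g W W → RecSet g ⊆ W → Convex ℝ (rotPOn g φ W) →
      rotPOn g φ W = rotMZ g φ := by
  refine ⟨(convexHull_mono (aux_sub g φ _)).antisymm
    (convexHull_min (aux_main g hg φ hφ) (convex_convexHull ℝ _)), ?_⟩
  intro W _ hW hconv
  refine (aux_sub g φ W).antisymm ((aux_main g hg φ hφ).trans (convexHull_min ?_ hconv))
  rintro v ⟨z, hz, h⟩
  exact ⟨z, hW hz, h⟩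
end

section
/- Let Z be a compact metric space, g : Z → Z a continuous map, and φ : Z → ℝ^k a bounded function. Let W ⊆ Z and K ∈ ℕ be such that for every z ∈ Z there is some r with 1 ≤ r ≤ K and gʳ(z) ∈ W. Define N : W → ℕ by N(w) = min{r ≥ 1 : gʳ(w) ∈ W} and the return map R : W → W by R(w) = g^{N(w)}(w). Suppose Δ is a compact convex subset of ℝ^ℓ, β : W → Δ is a function, and L : ℝ^ℓ → ℝ^k, M : ℝ^ℓ → ℝ are linear maps such that φ_g(w, N(w)) = L(β(w)) and N(w) = M(β(w)) for all w ∈ W, that M(v) > 0 for all v ∈ Δ, and that the map Q : Δ → ℝ^k, Q(v) = L(v)/M(v), is injective on Δ. Then rot_p(Z,g,φ) = Q(rot_p(W,R,β)), where rot_p(W,R,β) = {lim_{r→∞} β_R(w,r)/r : w ∈ W, the limit exists} and β_R(w,r) = Σ_{i=0}^{r-1} β(Rⁱ(w)). -/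
open Filter Topology MeasureTheory

lemma cocycle_add' {Z : Type*} {k : ℕ} (g : Z → Z) (φ : Z → Fin k → ℝ) (z : Z) (m n : ℕ) :
    cocycle g φ z (m + n) = cocycle g φ z m + cocycle g φ (g^[m] z) n := by
  unfold cocycle
  rw [Finset.sum_range_add]
  congr 1
  refine Finset.sum_congr rfl fun i _ => ?_
  rw [add_comm, Function.iterate_add_apply]

lemma cocycle_norm_le {Z : Type*} {k : ℕ} (g : Z → Z) (φ : Z → Fin k → ℝ) (C : ℝ)
    (hC : ∀ z, ‖φ z‖ ≤ C) (z : Z) (n : ℕ) : ‖cocycle g φ z n‖ ≤ n * C := by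
  unfold cocycle
  refine (norm_sum_le_of_le _ (fun i _ => hC _)).trans ?_
  simp

lemma hasAvg_shift {Z : Type*} {k : ℕ} (g : Z → Z) (φ : Z → Fin k → ℝ) (z : Z) (m : ℕ)
    (v : Fin k → ℝ) (h : hasAvg g φ z v) : hasAvg g φ (g^[m] z) v := by
  unfold hasAvg at *
  have h0 : Tendsto (fun r : ℕ => (r : ℝ)⁻¹) atTop (nhds 0) :=
    tendsto_inv_atTop_zero.comp tendsto_natCast_atTop_atTop
  have h1 : Tendsto (fun r : ℕ => 1 + (m : ℝ) * (r : ℝ)⁻¹) atTop (nhds 1) := by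
    simpa using (h0.const_mul (m : ℝ)).const_add 1
  have h2 := h.comp (tendsto_add_atTop_nat m)
  have h3 := (h1.smul h2).sub (h0.smul_const (cocycle g φ z m))
  simp only [one_smul, zero_smul, sub_zero] at h3
  refine h3.congr' ?_
  filter_upwards [eventually_ge_atTop 1] with r hr
  have hr' : (r : ℝ) ≠ 0 := by positivity
  have hr2 : ((r : ℝ) + m) ≠ 0 := by positivity
  have e : cocycle g φ (g^[m] z) r = cocycle g φ z (r + m) - cocycle g φ z m := by
    rw [add_comm r m, cocycle_add']; simp
  rw [e, smul_sub]
  congr 1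
  simp only [Function.comp]
  rw [smul_smul]
  congr 1
  push_cast
  field_simp

/-- Computation of the pointwise rotation set via an induced (return) map:
if the return-time observable and the induced cocycle both factor linearly through an
observable `β` taking values in a compact convex set `Δ`, and the projective map
`Q(v) = L(v)/M(v)` is injective on `Δ`, then `rot_p(Z,g,φ) = Q(rot_p(W,R,β))`. -/
theorem stmt3 {Z : Type*} [MetricSpace Z] [CompactSpace Z] {k l : ℕ}
    (g : Z → Z) (hg : Continuous g) (φ : Z → Fin k → ℝ) (hφbdd : ∃ C, ∀ z, ‖φ z‖ ≤ C)
    (W : Set Z) (K : ℕ)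
    (hK : ∀ z : Z, ∃ r, 1 ≤ r ∧ r ≤ K ∧ g^[r] z ∈ W)
    (N : Z → ℕ)
    (hN : ∀ w ∈ W, 1 ≤ N w ∧ g^[N w] w ∈ W ∧ ∀ r, 1 ≤ r → g^[r] w ∈ W → N w ≤ r)
    (R : Z → Z) (hR : ∀ w ∈ W, R w = g^[N w] w)
    (Δ : Set (Fin l → ℝ)) (hΔc : IsCompact Δ) (hΔconv : Convex ℝ Δ)
    (β : Z → Fin l → ℝ) (hβ : ∀ w ∈ W, β w ∈ Δ)
    (L : (Fin l → ℝ) →ₗ[ℝ] (Fin k → ℝ)) (M : (Fin l → ℝ) →ₗ[ℝ] ℝ)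
    (hL : ∀ w ∈ W, cocycle g φ w (N w) = L (β w))
    (hM : ∀ w ∈ W, (N w : ℝ) = M (β w))
    (hMpos : ∀ v ∈ Δ, 0 < M v)
    (hQinj : Set.InjOn (fun v => (M v)⁻¹ • L v) Δ) :
    rotP g φ = (fun v => (M v)⁻¹ • L v) '' rotPOn R β W := by
  obtain ⟨C, hC⟩ := hφbdd
  have hNK : ∀ w ∈ W, N w ≤ K := by
    intro w hw
    obtain ⟨r, h1, h2, h3⟩ := hK w
    exact ((hN w hw).2.2 r h1 h3).trans h2
  have hRW : ∀ w ∈ W, ∀ n, R^[n] w ∈ W := by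
    intro w hw n
    induction n with
    | zero => exact hw
    | succ n ih =>
      rw [Function.iterate_succ_apply', hR _ ih]
      exact (hN _ ih).2.1
  have hLc : Continuous L := L.continuous_of_finiteDimensional
  have hMc : Continuous M := M.continuous_of_finiteDimensional
  have hQc : ContinuousOn (fun v => (M v)⁻¹ • L v) Δ :=
    (hMc.continuousOn.inv₀ (fun v hv => (hMpos v hv).ne')).smul hLc.continuousOn
  -- times
  let T : Z → ℕ → ℕ := fun w n => ∑ i ∈ Finset.range n, N (R^[i] w)
  have hTs : ∀ w n, T w (n + 1) = T w n + N (R^[n] w) := fun w n => Finset.sum_range_succ _ _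
  have hT0 : ∀ w, T w 0 = 0 := fun w => rfl
  have hTR : ∀ w ∈ W, ∀ n, R^[n] w = g^[T w n] w := by
    intro w hw n
    induction n with
    | zero => rfl
    | succ n ih =>
      rw [Function.iterate_succ_apply', hR _ (hRW w hw n), hTs, add_comm,
        Function.iterate_add_apply, ← ih]
  have hTM : ∀ w ∈ W, ∀ n, (T w n : ℝ) = M (cocycle R β w n) := by
    intro w hw n
    simp only [T, cocycle, map_sum]
    push_cast
    exact Finset.sum_congr rfl fun i _ => hM _ (hRW w hw i)
  have hTL : ∀ w ∈ W, ∀ n, cocycle g φ w (T w n) = L (cocycle R β w n) := by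
    intro w hw n
    induction n with
    | zero => simp [hT0, cocycle]
    | succ n ih =>
      rw [hTs, cocycle_add', ih, ← hTR w hw, hL _ (hRW w hw n)]
      simp [cocycle, Finset.sum_range_succ]
  have hTge : ∀ w ∈ W, ∀ n, n ≤ T w n := by
    intro w hw n
    induction n with
    | zero => simp
    | succ n ih => rw [hTs]; have := (hN _ (hRW w hw n)).1; omega
  have hTle : ∀ w ∈ W, ∀ n, T w n ≤ n * K := by
    intro w hw n
    induction n with
    | zero => simp [hT0]
    | succ n ih => rw [hTs]; have := hNK _ (hRW w hw n); rw [Nat.succ_mul]; omega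
  have haΔ : ∀ w ∈ W, ∀ n : ℕ, ((n + 1 : ℕ) : ℝ)⁻¹ • cocycle R β w (n + 1) ∈ Δ := by
    intro w hw n
    unfold cocycle
    rw [Finset.smul_sum]
    refine hΔconv.sum_mem (fun i _ => by positivity) ?_ (fun i _ => hβ _ (hRW w hw i))
    rw [Finset.sum_const, Finset.card_range, nsmul_eq_mul, mul_inv_cancel₀]
    positivity
  have hQ : ∀ w ∈ W, ∀ n : ℕ, (T w (n+1) : ℝ)⁻¹ • cocycle g φ w (T w (n+1)) =
      (M (((n + 1 : ℕ) : ℝ)⁻¹ • cocycle R β w (n + 1)))⁻¹ •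
        L (((n + 1 : ℕ) : ℝ)⁻¹ • cocycle R β w (n + 1)) := by
    intro w hw n
    rw [map_smul, map_smul, hTL w hw, hTM w hw, smul_smul]
    congr 1
    have : ((n + 1 : ℕ) : ℝ) ≠ 0 := by positivity
    rw [smul_eq_mul, mul_inv, inv_inv, mul_comm, ← mul_assoc, inv_mul_cancel₀ this, one_mul]
  apply Set.Subset.antisymm
  · rintro u ⟨z, hz⟩
    obtain ⟨r0, -, -, hw⟩ := hK z
    have hu := hasAvg_shift g φ z r0 u hz
    generalize g^[r0] z = w at hw hu
    have hTt : Tendsto (fun n => T w (n+1)) atTop atTop :=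
      tendsto_atTop_mono (fun n => (Nat.le_succ n).trans (hTge w hw (n+1))) tendsto_id
    have h1 := hu.comp hTt
    have h2 : Tendsto (fun n : ℕ =>
        Δ.restrict (fun v => (M v)⁻¹ • L v) ⟨_, haΔ w hw n⟩) atTop (nhds u) :=
      h1.congr (fun n => hQ w hw n)
    haveI : CompactSpace Δ := isCompact_iff_compactSpace.mp hΔc
    have hce : IsClosedEmbedding (Δ.restrict (fun v => (M v)⁻¹ • L v)) :=
      (continuousOn_iff_continuous_restrict.mp hQc).isClosedEmbedding
        (Set.injOn_iff_injective.mp hQinj)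
    obtain ⟨v, hv⟩ := hce.isClosed_range.mem_of_tendsto h2
      (Eventually.of_forall fun n => Set.mem_range_self _)
    refine ⟨v.1, ⟨w, hw, ?_⟩, hv⟩
    rw [← hv] at h2
    have h3 := hce.isInducing.tendsto_nhds_iff.mpr h2
    have h4 := (continuous_subtype_val.tendsto v).comp h3
    exact (tendsto_add_atTop_iff_nat (f := fun r : ℕ => (r : ℝ)⁻¹ • cocycle R β w r) 1).mp h4
  · rintro _ ⟨v, ⟨w, hw, hv⟩, rfl⟩
    refine ⟨w, ?_⟩
    have hv1 := (tendsto_add_atTop_iff_nat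
      (f := fun r : ℕ => (r : ℝ)⁻¹ • cocycle R β w r) 1).mpr hv
    have hvΔ : v ∈ Δ := hΔc.isClosed.mem_of_tendsto hv1 (Eventually.of_forall (haΔ w hw))
    have hv2 := (hQc v hvΔ).tendsto.comp
      (tendsto_nhdsWithin_iff.mpr ⟨hv1, Eventually.of_forall (haΔ w hw)⟩)
    have hv3 : Tendsto (fun n => (T w (n+1) : ℝ)⁻¹ • cocycle g φ w (T w (n+1))) atTop
        (nhds ((M v)⁻¹ • L v)) := hv2.congr (fun n => (hQ w hw n).symm)
    have hv4 := (tendsto_add_atTop_iff_nat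
      (f := fun n : ℕ => (T w n : ℝ)⁻¹ • cocycle g φ w (T w n)) 1).mp hv3
    have hex : ∀ r, ∃ n, T w n ≤ r ∧ r < T w (n+1) := by
      intro r
      induction r with
      | zero => exact ⟨0, by simp [hT0], by have := hTge w hw 1; simp; omega⟩
      | succ r ih =>
        obtain ⟨n, h1, h2⟩ := ih
        by_cases h : r + 1 < T w (n+1)
        · exact ⟨n, by omega, h⟩
        · refine ⟨n+1, by omega, ?_⟩
          have := (hN _ (hRW w hw (n+1))).1
          rw [hTs w (n+1)]; omega
    choose n hn1 hn2 using hex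
    have hnK : ∀ r, r ≤ T w (n r) + K := by
      intro r
      have h := hn2 r
      rw [hTs] at h
      have := hNK _ (hRW w hw (n r))
      omega
    have hnt : Tendsto n atTop atTop := by
      refine tendsto_atTop.mpr fun b => ?_
      filter_upwards [eventually_ge_atTop (b * K)] with r hr
      by_contra hlt
      have h1 := hTle w hw (n r + 1)
      have h2 := hn2 r
      have h3 : (n r + 1) * K ≤ b * K := Nat.mul_le_mul_right _ (by omega)
      omega
    have h0 : Tendsto (fun r : ℕ => (r : ℝ)⁻¹) atTop (nhds 0) :=
      tendsto_inv_atTop_zero.comp tendsto_natCast_atTop_atTop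
    have hrat : Tendsto (fun r : ℕ => (r : ℝ)⁻¹ * (T w (n r) : ℝ)) atTop (nhds 1) := by
      have hlow : Tendsto (fun r : ℕ => 1 - (r : ℝ)⁻¹ * K) atTop (nhds 1) := by
        simpa using (h0.mul_const (K : ℝ)).const_sub 1
      refine tendsto_of_tendsto_of_tendsto_of_le_of_le' hlow tendsto_const_nhds ?_ ?_
      · filter_upwards [eventually_ge_atTop 1] with r hr
        have hr' : (0 : ℝ) < r := by positivity
        have h : (r : ℝ) ≤ T w (n r) + K := by exact_mod_cast hnK r
        have h5 := mul_le_mul_of_nonneg_left h (inv_pos.mpr hr').le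
        rw [inv_mul_cancel₀ hr'.ne'] at h5
        linarith
      · filter_upwards [eventually_ge_atTop 1] with r hr
        have hr' : (0 : ℝ) < r := by positivity
        have h : (T w (n r) : ℝ) ≤ r := by exact_mod_cast hn1 r
        have h5 := mul_le_mul_of_nonneg_left h (inv_pos.mpr hr').le
        rwa [inv_mul_cancel₀ hr'.ne'] at h5
    have hC0 : 0 ≤ C := (norm_nonneg _).trans (hC w)
    have herr : Tendsto (fun r : ℕ => (r : ℝ)⁻¹ •
        (cocycle g φ w r - cocycle g φ w (T w (n r)))) atTop (nhds 0) := by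
      have hb : Tendsto (fun r : ℕ => (r : ℝ)⁻¹ * (K * C)) atTop (nhds 0) := by
        simpa using h0.mul_const ((K : ℝ) * C)
      refine squeeze_zero_norm (fun r => ?_) hb
      rw [norm_smul, Real.norm_of_nonneg (by positivity)]
      refine mul_le_mul_of_nonneg_left ?_ (by positivity)
      obtain ⟨d, hd⟩ := Nat.exists_eq_add_of_le (hn1 r)
      have e : cocycle g φ w r - cocycle g φ w (T w (n r)) =
          cocycle g φ (g^[T w (n r)] w) d := by
        conv_lhs => rw [show cocycle g φ w r = cocycle g φ w (T w (n r) + d) by rw [← hd]]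
        rw [cocycle_add']; simp
      rw [e]
      refine (cocycle_norm_le g φ C hC _ d).trans ?_
      have : d ≤ K := by have := hnK r; omega
      gcongr
    have hfin := (hrat.smul (hv4.comp hnt)).add herr
    simp only [one_smul, add_zero] at hfin
    refine hfin.congr fun r => ?_
    simp only [Function.comp]
    rw [smul_sub]
    have : ((r : ℝ)⁻¹ * (T w (n r) : ℝ)) • (T w (n r) : ℝ)⁻¹ • cocycle g φ w (T w (n r)) =
        (r : ℝ)⁻¹ • cocycle g φ w (T w (n r)) := by
      by_cases h : T w (n r) = 0
      · rw [h]; simp [cocycle]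
      · have h' : (T w (n r) : ℝ) ≠ 0 := by exact_mod_cast h
        rw [smul_smul, mul_assoc, mul_inv_cancel₀ h', mul_one]
    rw [this]; abel
end

section
/- Fix an integer n ≥ 1. Let Λ_n be the substitution on the alphabet {0,1,2} defined by 0 ↦ 1, 1 ↦ 2 0^{n+1}, 2 ↦ 2 0^n, and let u ∈ Σ⁺ be the unique fixed point of Λ_n beginning with the digit 2 (so u = lim_{r→∞} Λ_nʳ(2)). Let A_n be the 3×3 matrix with rows (0, n+1, n), (1, 0, 0), (0, 1, 1), and let α ∈ Δ satisfy A_n α = λ α where λ is the spectral radius of A_n (α is the normalized Perron–Frobenius eigenvector of A_n). Then u does not have bounded deviation from α: sup_{r ∈ ℕ} ‖κ_σ(u,r) − r·α‖ = ∞. -/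
open Filter Topology MeasureTheory

/-- The sequence space `Σ⁺ = {0,1,2}^ℕ` (with the product topology). -/
abbrev Seq3 := ℕ → Fin 3

/-- The shift map `σ`. -/
def shift (s : Seq3) : Seq3 := fun n => s (n + 1)

/-- The observable `κ(s) = e_{s₀}`. -/
noncomputable def kappa (s : Seq3) : Fin 3 → ℝ := fun i => if i = s 0 then 1 else 0

/-- The cocycle `κ_σ(s,r) = Σ_{i<r} κ(σⁱ s)`. -/
noncomputable def birk (s : Seq3) (r : ℕ) : Fin 3 → ℝ :=
  ∑ i ∈ Finset.range r, kappa (shift^[i] s)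

/-- The Birkhoff digit frequency of `s` exists and equals `v`. -/
def hasFreq (s : Seq3) (v : Fin 3 → ℝ) : Prop :=
  Tendsto (fun r : ℕ => (r : ℝ)⁻¹ • birk s r) atTop (nhds v)

/-- The lexicographic order on `Σ⁺`. -/
def lexLe (s t : Seq3) : Prop :=
  s = t ∨ ∃ n, (∀ i, i < n → s i = t i) ∧ s n < t n

/-- The set `Max` of maximal sequences. -/
def MaxSet : Set Seq3 := {w | w 0 = 2 ∧ ∀ r : ℕ, lexLe (shift^[r] w) w}

/-- The symbolic β-shift `B(w)`. -/
def BetaShift (w : Seq3) : Set Seq3 := {s | ∀ r : ℕ, lexLe (shift^[r] s) w}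

/-- The digit frequency set `DF(w)`. -/
def DF (w : Seq3) : Set (Fin 3 → ℝ) := {v | ∃ s ∈ BetaShift w, hasFreq s v}

/-- The Misiurewicz–Ziemian digit frequency set `DF_MZ(X)` of a subset `X ⊆ Σ⁺`. -/
def DFMZ (X : Set Seq3) : Set (Fin 3 → ℝ) :=
  {v | ∃ (s : ℕ → Seq3) (r : ℕ → ℕ), (∀ i, s i ∈ X) ∧ Tendsto r atTop atTop ∧
    Tendsto (fun i => (r i : ℝ)⁻¹ • birk (s i) (r i)) atTop (nhds v)}

/-- The standard 2-simplex `Δ ⊆ ℝ³`. -/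
def Delta : Set (Fin 3 → ℝ) := {α | (∀ i, 0 ≤ α i) ∧ α 0 + α 1 + α 2 = 1}

/-- `Δ' = {α ∈ Δ : α₂ > 0}`. -/
def Delta' : Set (Fin 3 → ℝ) := {α | α ∈ Delta ∧ 0 < α 2}

/-- `I` is the infimax sequence of `α`: the infimum, in the lexicographic order, of the
(nonempty) set of maximal sequences with digit frequency `α`; it belongs to `Max`. -/
def IsInfimax (α : Fin 3 → ℝ) (I : Seq3) : Prop :=
  {w | w ∈ MaxSet ∧ hasFreq w α}.Nonempty ∧ I ∈ MaxSet ∧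
    (∀ w, w ∈ MaxSet ∧ hasFreq w α → lexLe I w) ∧
    (∀ b : Seq3, (∀ w, w ∈ MaxSet ∧ hasFreq w α → lexLe b w) → lexLe b I)

/-- The closure of the forward `σ`-orbit of `s` (e.g. `C_α` is `orbitClosure I(α)`). -/
def orbitClosure (s : Seq3) : Set Seq3 := closure {t | ∃ r : ℕ, shift^[r] s = t}

/-- A vector in `ℝ³` is rational if all its coordinates are. -/
def IsRat (v : Fin 3 → ℝ) : Prop := ∀ i, ∃ q : ℚ, v i = (q : ℝ)

/-- A minimal set of a continuous map: a nonempty compact invariant set in which every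
point has dense forward orbit. -/
def IsMinimalSet {X : Type*} [TopologicalSpace X] (f : X → X) (C : Set X) : Prop :=
  C.Nonempty ∧ IsCompact C ∧ Set.MapsTo f C C ∧
    ∀ x ∈ C, C ⊆ closure {y | ∃ n : ℕ, f^[n] x = y}

/-- The substitution `Λ_n` on `{0,1,2}`: `0 ↦ 1`, `1 ↦ 2 0^{n+1}`, `2 ↦ 2 0^n`. -/
def subst (n : ℕ) (d : Fin 3) : List (Fin 3) :=
  if d = 0 then [1]
  else if d = 1 then 2 :: List.replicate (n + 1) 0
  else 2 :: List.replicate n 0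

/-- `Λ_n` applied to a finite word. -/
def substWord (n : ℕ) (w : List (Fin 3)) : List (Fin 3) := w.flatMap (subst n)



lemma shift_iter_zero (u : Seq3) (i : ℕ) : (shift^[i] u) 0 = u i := by
  have h : ∀ (i : ℕ) (u : Seq3) (j : ℕ), (shift^[i] u) j = u (j + i) := by
    intro i
    induction i with
    | zero => intro u j; rfl
    | succ k ih =>
      intro u j
      rw [Function.iterate_succ_apply, ih]
      show u (j + k + 1) = _
      rfl
  simpa using h i u 0

lemma dot_birk (l : Fin 3 → ℝ) (u : Seq3) (r : ℕ) :
    ∑ j, l j * birk u r j = ∑ i ∈ Finset.range r, l (u i) := by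
  unfold birk
  simp only [Finset.sum_apply, Finset.mul_sum]
  rw [Finset.sum_comm]
  refine Finset.sum_congr rfl fun i _ => ?_
  simp [kappa, shift_iter_zero]

lemma root_exists (n : ℕ) (hn : 1 ≤ n) :
    ∃ m : ℝ, m < -1 ∧ m ^ 3 - m ^ 2 - ((n : ℝ) + 1) * m + 1 = 0 := by
  have hn' : (1 : ℝ) ≤ n := by exact_mod_cast hn
  have hc : ContinuousOn (fun m : ℝ => m ^ 3 - m ^ 2 - ((n : ℝ) + 1) * m + 1)
      (Set.Icc (-((n : ℝ) + 1)) (-1)) := by fun_prop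
  have h := intermediate_value_Icc (by linarith) hc
  have h0 : (0 : ℝ) ∈ Set.Icc
      ((-((n : ℝ) + 1)) ^ 3 - (-((n : ℝ) + 1)) ^ 2 - ((n : ℝ) + 1) * (-((n : ℝ) + 1)) + 1)
      ((-1 : ℝ) ^ 3 - (-1) ^ 2 - ((n : ℝ) + 1) * (-1) + 1) := by
    constructor
    · have : (1 : ℝ) ≤ ((n : ℝ) + 1) ^ 3 := one_le_pow₀ (by linarith)
      nlinarith
    · linarith
  obtain ⟨m, hm, hm0⟩ := h h0
  simp only at hm0
  refine ⟨m, lt_of_le_of_ne hm.2 ?_, hm0⟩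
  rintro rfl
  linarith

lemma sum_substWord (n : ℕ) (l : Fin 3 → ℝ) (m : ℝ) (h0 : l 1 = m * l 0)
    (h1 : l 2 + ((n : ℝ) + 1) * l 0 = m * l 1) (h2 : l 2 + (n : ℝ) * l 0 = m * l 2)
    (w : List (Fin 3)) : ((substWord n w).map l).sum = m * (w.map l).sum := by
  unfold substWord
  induction w with
  | nil => simp
  | cons d w ih =>
    rw [List.flatMap_cons, List.map_append, List.sum_append, ih, List.map_cons, List.sum_cons,
      mul_add]
    congr 1
    fin_cases d
    · simpa [subst] using h0
    · simpa [subst] using h1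
    · simpa [subst] using h2

/-- Let `u = lim_r Λ_nʳ(2)` be the fixed point of the substitution `Λ_n`
beginning with `2` (equivalently, each `Λ_nʳ(2)` is a prefix of `u`), let `A_n` be the
abelianization of `Λ_n`, and let `α ∈ Δ` be the normalized Perron–Frobenius eigenvector
of `A_n` (eigenvector for the eigenvalue `lam` equal to the spectral radius). Then `u`
does not have bounded deviation from `α`. -/
theorem stmt5 (n : ℕ) (hn : 1 ≤ n) (u : Seq3)
    (hu : ∀ r : ℕ, ∀ i : ℕ, ∀ h : i < ((substWord n)^[r] [2]).length,
      u i = ((substWord n)^[r] [2]).get ⟨i, h⟩)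
    (A : Matrix (Fin 3) (Fin 3) ℝ)
    (hA : A = !![0, (n : ℝ) + 1, (n : ℝ); 1, 0, 0; 0, 1, 1])
    (lam : ℝ) (α : Fin 3 → ℝ) (hα : α ∈ Delta)
    (heig : A.mulVec α = lam • α)
    (hlam : ∀ c ∈ spectrum ℂ (A.map (algebraMap ℝ ℂ)), ‖c‖ ≤ lam) :
    ¬ BddAbove (Set.range fun r : ℕ => ‖birk u r - (r : ℝ) • α‖) := by
  rintro ⟨M, hM⟩
  obtain ⟨m, hm, hroot⟩ := root_exists n hn
  have hn' : (1 : ℝ) ≤ n := by exact_mod_cast hn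
  set l : Fin 3 → ℝ := ![1, m, m ^ 2 - ((n : ℝ) + 1)] with hl
  have l0 : l 0 = 1 := rfl
  have l1 : l 1 = m := rfl
  have l2 : l 2 = m ^ 2 - ((n : ℝ) + 1) := rfl
  have hl2 : l 2 ≠ 0 := by
    rw [l2]; intro h
    have : (m - 1) * (m ^ 2 - ((n : ℝ) + 1)) = n := by linarith
    rw [h] at this; linarith
  obtain ⟨hpos, hsum⟩ := hα
  have p0 := hpos 0
  have p1 := hpos 1
  have p2 := hpos 2
  have e0 := congrFun heig 0
  have e1 := congrFun heig 1
  have e2 := congrFun heig 2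
  simp [hA, Matrix.mulVec, dotProduct, Fin.sum_univ_three] at e0 e1 e2
  have hlam0 : 0 ≤ lam := by
    have : lam = lam * (α 0 + α 1 + α 2) := by rw [hsum, mul_one]
    rw [this, mul_add, mul_add, ← e0, ← e1, ← e2]
    positivity
  have hdot : ∑ j, l j * α j = 0 := by
    rw [Fin.sum_univ_three, l0, l1, l2]
    have : (lam - m) * (1 * α 0 + m * α 1 + (m ^ 2 - ((n : ℝ) + 1)) * α 2) = 0 := by
      linear_combination (-1 : ℝ) * e0 - m * e1 - (m ^ 2 - ((n : ℝ) + 1)) * e2 - α 2 * hroot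
    rcases mul_eq_zero.mp this with h | h
    · linarith
    · exact h
  have hiter : ∀ k : ℕ, (((substWord n)^[k] [2]).map l).sum = m ^ k * l 2 := by
    intro k
    induction k with
    | zero => simp
    | succ k ih =>
      rw [Function.iterate_succ_apply', sum_substWord n l m, ih]
      · ring
      · rw [l0, l1]; ring
      · rw [l0, l1, l2]; ring
      · rw [l0, l2]; linarith
  have key : ∀ k : ℕ, |m| ^ k * |l 2| ≤ (∑ j, |l j|) * M := by
    intro k
    set w := (substWord n)^[k] [2] with hw
    have hb : ∑ j, l j * (birk u w.length - (w.length : ℝ) • α) j = m ^ k * l 2 := by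
      have : ∑ j, l j * (birk u w.length - (w.length : ℝ) • α) j
          = ∑ j, l j * birk u w.length j - (w.length : ℝ) * ∑ j, l j * α j := by
        simp only [Fin.sum_univ_three, Pi.sub_apply, Pi.smul_apply, smul_eq_mul]; ring
      rw [this, hdot, dot_birk, ← hiter k, ← hw, mul_zero, sub_zero, Finset.sum_range,
        ← Fin.sum_univ_fun_getElem]
      refine Finset.sum_congr rfl fun i _ => ?_
      rw [hu k i i.2]; rfl
    rw [← abs_pow, ← abs_mul, ← hb]
    have hMw : ‖birk u w.length - (w.length : ℝ) • α‖ ≤ M := hM ⟨w.length, rfl⟩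
    refine (Finset.abs_sum_le_sum_abs _ _).trans ?_
    rw [Finset.sum_mul]
    refine Finset.sum_le_sum fun j _ => ?_
    rw [abs_mul]
    exact mul_le_mul_of_nonneg_left ((norm_le_pi_norm _ j).trans hMw) (abs_nonneg _)
  have hm1 : 1 < |m| := by rw [abs_of_neg (by linarith)]; linarith
  have hl2p : 0 < |l 2| := abs_pos.mpr hl2
  obtain ⟨k, hk⟩ := pow_unbounded_of_one_lt ((∑ j, |l j|) * M / |l 2|) hm1
  rw [div_lt_iff₀ hl2p] at hk
  linarith [key k]
end

section
/- For every maximal sequence w ∈ Max, the digit frequency set DF(w) is a nonempty, compact, convex subset of the standard 2-simplex Δ. -/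
open Filter Topology MeasureTheory

noncomputable def ee (d : Fin 3) : Fin 3 → ℝ := fun i => if i = d then 1 else 0

lemma shift_iter (s : Seq3) (r i : ℕ) : (shift^[r] s) i = s (r + i) := by
  induction r generalizing s with
  | zero => simp
  | succ r ih =>
    rw [Function.iterate_succ_apply, ih]
    simp only [shift]
    congr 1; omega

lemma birk_eq (s : Seq3) (n : ℕ) : birk s n = ∑ k ∈ Finset.range n, ee (s k) := by
  unfold birk
  refine Finset.sum_congr rfl fun k _ => ?_
  funext i
  simp [kappa, ee, shift_iter]

lemma ee_norm (d : Fin 3) : ‖ee d‖ ≤ 1 := by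
  rw [pi_norm_le_iff_of_nonneg zero_le_one]
  intro i
  unfold ee
  split_ifs <;> simp

lemma birk_congr {s t : Seq3} {n : ℕ} (h : ∀ i, i < n → s i = t i) : birk s n = birk t n := by
  rw [birk_eq, birk_eq]
  refine Finset.sum_congr rfl fun k hk => ?_
  rw [h k (Finset.mem_range.1 hk)]

lemma birk_lip (s : Seq3) (n m : ℕ) : ‖birk s (n + m) - birk s n‖ ≤ m := by
  rw [birk_eq, birk_eq, Finset.sum_range_add, add_sub_cancel_left]
  refine (norm_sum_le _ _).trans ?_
  refine (Finset.sum_le_sum fun i _ => ee_norm _).trans ?_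
  simp

def Free (w s : Seq3) (n : ℕ) : Prop :=
  ∀ r, r < n → ∃ m, r + m < n ∧ (∀ i, i < m → s (r + i) = w i) ∧ s (r + m) < w m

def cat (s : Seq3) (n : ℕ) (t : Seq3) : Seq3 := fun i => if i < n then s i else t (i - n)

lemma cat_lt {s t : Seq3} {n i : ℕ} (h : i < n) : cat s n t i = s i := by simp [cat, h]
lemma cat_add {s t : Seq3} {n i : ℕ} : cat s n t (n + i) = t i := by simp [cat]

lemma Free.congr {w s t : Seq3} {n : ℕ} (hs : Free w s n) (h : ∀ i, i < n → t i = s i) :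
    Free w t n := by
  intro r hr
  obtain ⟨m, hm, h1, h2⟩ := hs r hr
  refine ⟨m, hm, fun i hi => ?_, ?_⟩
  · rw [h _ (by omega)]; exact h1 i hi
  · rw [h _ hm]; exact h2

lemma Free.cat {w s t : Seq3} {n m : ℕ} (hs : Free w s n) (ht : Free w t m) :
    Free w (cat s n t) (n + m) := by
  intro r hr
  by_cases h : r < n
  · obtain ⟨k, hk, h1, h2⟩ := (hs.congr (fun i hi => cat_lt (t := t) hi)) r h
    exact ⟨k, by omega, h1, h2⟩
  · obtain ⟨q, rfl⟩ := Nat.exists_eq_add_of_le (not_lt.1 h)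
    obtain ⟨k, hk, h1, h2⟩ := ht q (by omega)
    refine ⟨k, by omega, fun i hi => ?_, ?_⟩
    · rw [add_assoc, cat_add]; exact h1 i hi
    · rw [add_assoc, cat_add]; exact h2

lemma birk_cat (s t : Seq3) (n m : ℕ) : birk (cat s n t) (n + m) = birk s n + birk t m := by
  rw [birk_eq, Finset.sum_range_add, ← birk_eq, birk_congr (fun i hi => cat_lt hi), birk_eq t]
  simp [cat_add]

lemma rep {w s : Seq3} {n : ℕ} (hs : Free w s n) (k : ℕ) :
    ∃ t, Free w t (k * n) ∧ birk t (k * n) = (k : ℝ) • birk s n := by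
  induction k with
  | zero => exact ⟨s, fun r hr => by omega, by simp [birk]⟩
  | succ k ih =>
    obtain ⟨t, h1, h2⟩ := ih
    refine ⟨cat t (k * n) s, ?_, ?_⟩
    · rw [Nat.succ_mul]; exact h1.cat hs
    · rw [Nat.succ_mul, birk_cat, h2]; push_cast; rw [add_smul, one_smul]

/-- Making a word free by changing one digit. -/
lemma fixw {w s : Seq3} (hw : w 0 = 2) (hs : s ∈ BetaShift w) (n : ℕ) :
    ∃ t, Free w t n ∧ ‖birk t n - birk s n‖ ≤ 2 := by
  by_cases hz : ∃ p, p < n ∧ s p ≠ 0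
  · obtain ⟨p, hp, hp0, hmax⟩ : ∃ p, p < n ∧ s p ≠ 0 ∧ ∀ q, p < q → q < n → s q = 0 := by
      obtain ⟨p, hp, hp0⟩ := hz
      have hsp := Nat.findGreatest_spec (P := fun k => k < n ∧ s k ≠ 0) hp.le ⟨hp, hp0⟩
      refine ⟨_, hsp.1, hsp.2, fun q hq hqn => ?_⟩
      have := Nat.findGreatest_is_greatest hq hqn.le
      by_contra hc
      exact this ⟨hqn, hc⟩
    have hup : ∀ i, i ≠ p → Function.update s p 0 i = s i := fun i hi => by
      simp [Function.update, hi]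
    have hupp : Function.update s p 0 p = 0 := by simp
    refine ⟨Function.update s p 0, ?_, ?_⟩
    · intro r hr
      by_cases hrp : p < r
      · refine ⟨0, by omega, by simp, ?_⟩
        rw [add_zero, hup r (by omega), hmax r hrp hr, hw]; decide
      · obtain ⟨q, rfl⟩ := Nat.exists_eq_add_of_le (not_lt.1 hrp)
        have key : ∀ (m : ℕ), (∀ i, i < m → s (r + i) = w i) → m ≤ q → s (r+m) ≤ w m →
          (m = q ∨ s (r+m) < w m) → 
          ∃ m, r + m < n ∧ (∀ i, i < m → Function.update s (r+q) 0 (r + i) = w i) ∧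
            Function.update s (r+q) 0 (r + m) < w m := by
          intro m h1 hmq h2 h3
          refine ⟨m, by omega, fun i hi => ?_, ?_⟩
          · rw [hup _ (by omega)]; exact h1 i hi
          · by_cases hmq' : m = q
            · subst hmq'
              rw [hupp]
              exact lt_of_lt_of_le (Fin.pos_iff_ne_zero.2 hp0) h2
            · rw [hup _ (by omega)]
              exact h3.resolve_left hmq'
        rcases hs r with h | ⟨m, h1, h2⟩
        · have h' : ∀ i, s (r + i) = w i := fun i => by rw [← shift_iter s r i, h]
          exact key q (fun i _ => h' i) le_rfl (h' q).le (Or.inl rfl)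
        · simp only [shift_iter] at h1 h2
          by_cases hmq : m ≤ q
          · exact key m h1 hmq h2.le (Or.inr h2)
          · exact key q (fun i hi => h1 i (by omega)) le_rfl (h1 q (by omega)).le (Or.inl rfl)
    · rw [birk_eq, birk_eq, ← Finset.sum_sub_distrib, Finset.sum_eq_single p]
      · refine (norm_sub_le _ _).trans ?_
        linarith [ee_norm (s p), ee_norm (Function.update s p 0 p)]
      · intro b _ hb
        rw [hup b hb, sub_self]
      · intro h; simp [hp] at h
  · push Not at hz
    refine ⟨s, fun r hr => ⟨0, by omega, by simp, ?_⟩, by simp⟩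
    rw [add_zero, hz r hr, hw]; decide

def KK (w : Seq3) : Set (Fin 3 → ℝ) :=
  {v | ∀ ε > 0, ∃ s n, 0 < n ∧ Free w s n ∧ ‖birk s n - (n : ℝ) • v‖ ≤ ε * n}

lemma DF_sub_KK {w : Seq3} (hw : w 0 = 2) : DF w ⊆ KK w := by
  rintro v ⟨s, hs, hv⟩ ε hε
  have h1 := (Metric.tendsto_atTop.1 hv) (ε / 2) (by positivity)
  obtain ⟨N, hN⟩ := h1
  obtain ⟨M, hM⟩ := exists_nat_gt (4 / ε)
  set n := max N M + 1 with hn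
  have hnpos : (0 : ℝ) < n := by positivity
  obtain ⟨t, ht, htb⟩ := fixw hw hs n
  refine ⟨t, n, by omega, ht, ?_⟩
  have h2 := hN n (by omega)
  rw [dist_eq_norm] at h2
  have h3 : birk s n - (n : ℝ) • v = (n : ℝ) • ((n : ℝ)⁻¹ • birk s n - v) := by
    rw [smul_sub, smul_smul, mul_inv_cancel₀ hnpos.ne', one_smul]
  have h4 : ‖birk s n - (n : ℝ) • v‖ ≤ n * (ε / 2) := by
    rw [h3, norm_smul, Real.norm_of_nonneg hnpos.le]
    gcongr
  have h5 : (4 / ε) ≤ n := hM.le.trans (by exact_mod_cast (by omega))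
  rw [div_le_iff₀ hε] at h5
  calc ‖birk t n - (n : ℝ) • v‖ = ‖(birk t n - birk s n) + (birk s n - (n : ℝ) • v)‖ := by
        congr 1; abel
    _ ≤ _ := norm_add_le _ _
    _ ≤ ε * n := by linarith

lemma KK_closed (w : Seq3) : IsClosed (KK w) := by
  refine isClosed_of_closure_subset fun v hv ε hε => ?_
  obtain ⟨u, hu, huv⟩ := Metric.mem_closure_iff.1 hv (ε / 2) (by positivity)
  obtain ⟨s, n, hn, hf, hb⟩ := hu (ε / 2) (by positivity)
  refine ⟨s, n, hn, hf, ?_⟩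
  rw [dist_comm, dist_eq_norm] at huv
  calc ‖birk s n - (n : ℝ) • v‖ = ‖(birk s n - (n : ℝ) • u) + (n : ℝ) • (u - v)‖ := by
        congr 1; rw [smul_sub]; abel
    _ ≤ ‖birk s n - (n : ℝ) • u‖ + ‖(n : ℝ) • (u - v)‖ := norm_add_le _ _
    _ ≤ ε / 2 * n + n * (ε / 2) := by
        rw [norm_smul, Real.norm_of_nonneg (Nat.cast_nonneg n)]
        gcongr
    _ = ε * n := by ring

lemma KK_convex (w : Seq3) : Convex ℝ (KK w) := by
  intro x hx y hy a b ha hb hab ε hε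
  obtain ⟨s, n, hn, hsf, hsb⟩ := hx (ε / 2) (by positivity)
  obtain ⟨t, m, hm, htf, htb⟩ := hy (ε / 2) (by positivity)
  obtain ⟨N, hN⟩ := exists_nat_gt ((‖x‖ + ‖y‖) / (ε / 2))
  have hNpos : (0 : ℝ) < N := lt_of_le_of_lt (by positivity) hN
  have hN0 : 0 < N := by exact_mod_cast hNpos
  rw [div_lt_iff₀ (by positivity)] at hN
  set p := ⌊a * N⌋₊ with hp
  have hp1 : (p : ℝ) ≤ a * N := Nat.floor_le (by positivity)
  have hp2 : a * N < p + 1 := Nat.lt_floor_add_one _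
  have hpN : p ≤ N := by
    have : (p : ℝ) ≤ N := hp1.trans (by nlinarith)
    exact_mod_cast this
  obtain ⟨q, hq⟩ := Nat.exists_eq_add_of_le hpN
  have hqr : (N : ℝ) = p + q := by exact_mod_cast hq
  obtain ⟨s', hs'f, hs'b⟩ := rep hsf (m * p)
  obtain ⟨t', ht'f, ht'b⟩ := rep htf (n * q)
  have hlen : m * p * n + n * q * m = n * m * N := by rw [hq]; ring
  refine ⟨cat s' (m * p * n) t', m * p * n + n * q * m, ?_, hs'f.cat ht'f, ?_⟩
  · rw [hlen]; positivity
  rw [birk_cat, hlen, hs'b, ht'b]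
  push_cast
  have hb' : b = 1 - a := by linarith
  have hid : ((m : ℝ) * p) • birk s n + ((n : ℝ) * q) • birk t m
      - ((n : ℝ) * m * N) • (a • x + b • y)
      = ((m : ℝ) * p) • (birk s n - (n : ℝ) • x) + ((n : ℝ) * q) • (birk t m - (m : ℝ) • y)
        + ((n : ℝ) * m * (p - a * N)) • (x - y) := by
    funext i
    simp only [Pi.add_apply, Pi.sub_apply, Pi.smul_apply, smul_eq_mul]
    rw [hb', hqr]; ring
  rw [hid]
  have habs : |(p : ℝ) - a * N| ≤ 1 := by rw [abs_le]; constructor <;> linarith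
  have e1 : ‖((m : ℝ) * p) • (birk s n - (n : ℝ) • x)‖ ≤ (m * p) * (ε / 2 * n) := by
    rw [norm_smul, Real.norm_of_nonneg (by positivity)]; gcongr
  have e2 : ‖((n : ℝ) * q) • (birk t m - (m : ℝ) • y)‖ ≤ (n * q) * (ε / 2 * m) := by
    rw [norm_smul, Real.norm_of_nonneg (by positivity)]; gcongr
  have e3 : ‖((n : ℝ) * m * (p - a * N)) • (x - y)‖ ≤ (n * m) * (N * (ε / 2)) := by
    rw [norm_smul, norm_mul, Real.norm_of_nonneg (by positivity), Real.norm_eq_abs, mul_assoc]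
    refine mul_le_mul_of_nonneg_left ?_ (by positivity)
    calc |(p : ℝ) - a * N| * ‖x - y‖ ≤ 1 * (‖x‖ + ‖y‖) := by
          gcongr; exact norm_sub_le _ _
      _ ≤ _ := by linarith
  calc _ ≤ _ := norm_add₃_le
    _ ≤ (m * p) * (ε / 2 * n) + (n * q) * (ε / 2 * m) + (n * m) * (N * (ε / 2)) := by linarith
    _ = _ := by rw [hqr]; ring

/-- Iterated concatenation. -/
def catN (b : ℕ → Seq3) (L : ℕ → ℕ) : ℕ → Seq3
  | 0 => b 0
  | j + 1 => cat (catN b L j) (L j) (b j)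

lemma KK_sub_DF (w : Seq3) : KK w ⊆ DF w := by
  intro v hv
  have hv' : ∀ k : ℕ, ∃ s n, 0 < n ∧ Free w s n ∧
      ‖birk s n - (n : ℝ) • v‖ ≤ (1 / ((k : ℝ) + 1)) * n := fun k => hv _ (by positivity)
  choose u ℓ hℓ huf hub using hv'
  set κ : ℕ → ℕ := fun j => Nat.findGreatest (fun k => ℓ k * k ≤ j) j with hκ
  have hκ1 : ∀ j, ℓ (κ j) * κ j ≤ j := fun j =>
    Nat.findGreatest_spec (P := fun k => ℓ k * k ≤ j) (Nat.zero_le j) (by simp)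
  have hκ2 : Tendsto κ atTop atTop := by
    refine tendsto_atTop.2 fun k => ?_
    filter_upwards [eventually_ge_atTop (max k (ℓ k * k))] with j hj
    exact Nat.le_findGreatest (le_of_max_le_left hj) (le_of_max_le_right hj)
  set b : ℕ → Seq3 := fun j => u (κ j) with hb
  set l : ℕ → ℕ := fun j => ℓ (κ j) with hl
  set L : ℕ → ℕ := fun j => ∑ i ∈ Finset.range j, l i with hL
  have hLs : ∀ j, L (j + 1) = L j + l j := fun j => Finset.sum_range_succ _ _
  have hlpos : ∀ j, 0 < l j := fun j => hℓ _
  have hLge : ∀ j, j ≤ L j := by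
    intro j
    induction j with
    | zero => simp
    | succ j ih => have := hLs j; have := hlpos j; omega
  have hLmono : Monotone L := monotone_nat_of_le_succ fun j => by have := hLs j; omega
  set P := catN b L with hP
  have hPf : ∀ j, Free w (P j) (L j) := by
    intro j
    induction j with
    | zero => intro r hr; simp [hL] at hr
    | succ j ih => rw [hLs]; exact ih.cat (huf _)
  have hPb : ∀ j, birk (P j) (L j) - (L j : ℝ) • v
      = ∑ i ∈ Finset.range j, (birk (b i) (l i) - (l i : ℝ) • v) := by
    intro j
    induction j with
    | zero => simp [hL, birk]
    | succ j ih =>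
      rw [Finset.sum_range_succ, ← ih, hLs]
      change birk (cat (P j) (L j) (b j)) _ - _ = _
      rw [birk_cat]; push_cast; rw [add_smul]; abel
  have hPc : ∀ j k, ∀ i, i < L j → P (j + k) i = P j i := by
    intro j k i hi
    induction k with
    | zero => rfl
    | succ k ih =>
      rw [← ih]
      exact cat_lt (hi.trans_le (hLmono (Nat.le_add_right j k)))
  set s : Seq3 := fun n => P (n + 1) n with hs
  have hsP : ∀ j i, i < L j → s i = P j i := by
    intro j i hi
    simp only [hs]
    rcases le_total j (i + 1) with h | h
    · obtain ⟨k, hk⟩ := Nat.exists_eq_add_of_le h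
      rw [hk]; exact hPc _ _ _ hi
    · obtain ⟨k, hk⟩ := Nat.exists_eq_add_of_le h
      rw [hk]; exact (hPc _ _ _ (by have := hLge (i + 1); omega)).symm
  refine ⟨s, ?_, ?_⟩
  · intro r
    have hf : Free w s (L (r + 1)) := (hPf (r + 1)).congr (hsP _)
    obtain ⟨m, _, h1, h2⟩ := hf r (by have := hLge (r + 1); omega)
    refine Or.inr ⟨m, fun i hi => ?_, ?_⟩
    · rw [shift_iter]; exact h1 i hi
    · rw [shift_iter]; exact h2
  · -- discrepancy
    have hlit : (fun i => birk (b i) (l i) - (l i : ℝ) • v) =o[atTop] (fun i => (l i : ℝ)) := by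
      rw [Asymptotics.isLittleO_iff]
      intro c hc
      have h0 : Tendsto (fun i => 1 / ((κ i : ℝ) + 1)) atTop (nhds 0) :=
        tendsto_one_div_add_atTop_nhds_zero_nat.comp hκ2
      filter_upwards [h0.eventually (gt_mem_nhds hc)] with i hi
      refine (hub (κ i)).trans ?_
      rw [Real.norm_of_nonneg (Nat.cast_nonneg _)]
      gcongr
    have hLt : Tendsto (fun j => ∑ i ∈ Finset.range j, (l i : ℝ)) atTop atTop := by
      have h1 : Tendsto (fun j => (L j : ℝ)) atTop atTop :=
        tendsto_natCast_atTop_atTop.comp (tendsto_atTop_mono hLge tendsto_id)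
      refine h1.congr fun j => ?_
      simp [hL]
    have hsum := hlit.sum_range (fun i => Nat.cast_nonneg _) hLt
    have hbound : ∀ c > 0, ∃ N, ∀ n, N ≤ n → ‖birk s n - (n : ℝ) • v‖ ≤ c * n := by
      intro c hc
      have hC : 0 < 1 + ‖v‖ := by positivity
      have hA := (Asymptotics.isLittleO_iff.1 hsum) (half_pos hc)
      obtain ⟨M, hM⟩ := exists_nat_gt ((1 + ‖v‖) / (c / 2))
      rw [div_lt_iff₀ (by positivity)] at hM
      obtain ⟨J, hJ⟩ := eventually_atTop.1 (hA.and (hκ2.eventually_ge_atTop M))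
      refine ⟨L J, fun n hn => ?_⟩
      obtain ⟨j, hjJ, hj1, hj2⟩ : ∃ j, J ≤ j ∧ L j ≤ n ∧ n < L (j + 1) := by
        have hJn : J ≤ n := (hLge J).trans hn
        refine ⟨Nat.findGreatest (fun k => L k ≤ n) n, Nat.le_findGreatest hJn hn,
          Nat.findGreatest_spec (P := fun k => L k ≤ n) hJn hn, ?_⟩
        by_contra hc
        push Not at hc
        have h1 := Nat.le_findGreatest (P := fun k => L k ≤ n) ((hLge _).trans hc) hc
        omega
      obtain ⟨hj3, hj4⟩ := hJ j hjJ
      obtain ⟨m, rfl⟩ := Nat.exists_eq_add_of_le hj1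
      have hml : m ≤ l j := by have := hLs j; omega
      rw [← hPb] at hj3
      have hcast : ∑ i ∈ Finset.range j, (l i : ℝ) = (L j : ℝ) := by simp [hL]
      rw [hcast, Real.norm_of_nonneg (Nat.cast_nonneg _), ← birk_congr (hsP j)] at hj3
      have hml' : (m : ℝ) ≤ l j := by exact_mod_cast hml
      have hlj : (l j : ℝ) * M ≤ L j := by
        have : l j * M ≤ L j :=
          (Nat.mul_le_mul_left _ hj4).trans ((hκ1 j).trans (hLge j))
        exact_mod_cast this
      have h6 : (m : ℝ) * (1 + ‖v‖) ≤ c / 2 * L j := by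
        calc (m : ℝ) * (1 + ‖v‖) ≤ l j * (M * (c / 2)) := by gcongr
          _ = (l j * M) * (c / 2) := by ring
          _ ≤ L j * (c / 2) := by gcongr
          _ = _ := by ring
      have h7 : ‖(m : ℝ) • v‖ = m * ‖v‖ := by
        rw [norm_smul, Real.norm_of_nonneg (Nat.cast_nonneg m)]
      have h8 := birk_lip s (L j) m
      have hid : birk s (L j + m) - ((L j + m : ℕ) : ℝ) • v
          = (birk s (L j) - (L j : ℝ) • v) + (birk s (L j + m) - birk s (L j))
            + -((m : ℝ) • v) := by
        push_cast; rw [add_smul]; abel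
      rw [hid]
      have hm0 : 0 ≤ c * (m : ℝ) := by positivity
      calc _ ≤ _ := norm_add₃_le
        _ ≤ c / 2 * L j + m + m * ‖v‖ := by rw [norm_neg, h7]; linarith
        _ ≤ c * ((L j + m : ℕ) : ℝ) := by push_cast; linarith
    rw [hasFreq, Metric.tendsto_atTop]
    intro ε hε
    obtain ⟨N, hN⟩ := hbound (ε / 2) (by positivity)
    refine ⟨N + 1, fun n hn => ?_⟩
    have hnpos : (0 : ℝ) < n := by exact_mod_cast (by omega : 0 < n)
    have h1 := hN n (by omega)
    have h3 : (n : ℝ)⁻¹ • birk s n - v = (n : ℝ)⁻¹ • (birk s n - (n : ℝ) • v) := by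
      rw [smul_sub, smul_smul, inv_mul_cancel₀ hnpos.ne', one_smul]
    rw [dist_eq_norm, h3, norm_smul, Real.norm_of_nonneg (by positivity)]
    calc (n : ℝ)⁻¹ * ‖birk s n - (n : ℝ) • v‖ ≤ (n : ℝ)⁻¹ * (ε / 2 * n) := by gcongr
      _ = ε / 2 := by field_simp
      _ < ε := by linarith

lemma Delta_closed : IsClosed Delta := by
  have : Delta = (⋂ i, {α : Fin 3 → ℝ | 0 ≤ α i}) ∩ {α | α 0 + α 1 + α 2 = 1} := by
    ext α; simp [Delta]
  rw [this]
  exact (isClosed_iInter fun i => isClosed_le continuous_const (continuous_apply i)).inter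
    (isClosed_eq (by fun_prop) continuous_const)

lemma DF_sub_Delta (w : Seq3) : DF w ⊆ Delta := by
  rintro v ⟨s, _, hv⟩
  refine Delta_closed.mem_of_tendsto hv ?_
  filter_upwards [eventually_gt_atTop 0] with n hn
  have hnpos : (0 : ℝ) < n := by exact_mod_cast hn
  rw [birk_eq]
  constructor
  · intro i
    rw [Pi.smul_apply, Finset.sum_apply, smul_eq_mul]
    refine mul_nonneg (by positivity) (Finset.sum_nonneg fun k _ => ?_)
    unfold ee; split_ifs <;> simp
  · simp only [Pi.smul_apply, Finset.sum_apply, smul_eq_mul]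
    rw [← mul_add, ← mul_add, ← Finset.sum_add_distrib, ← Finset.sum_add_distrib]
    have : ∀ d : Fin 3, ee d 0 + ee d 1 + ee d 2 = 1 := by
      intro d; fin_cases d <;> simp [ee]
    simp only [this]
    simp [hnpos.ne']

/-- For every maximal sequence `w`, the digit frequency set `DF(w)` is a
nonempty, compact, convex subset of the standard 2-simplex `Δ`. -/
theorem stmt6 (w : Seq3) (hw : w ∈ MaxSet) :
    (DF w).Nonempty ∧ IsCompact (DF w) ∧ Convex ℝ (DF w) ∧ DF w ⊆ Delta := by
  have hK : DF w = KK w := Set.Subset.antisymm (DF_sub_KK hw.1) (KK_sub_DF w)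
  refine ⟨?_, ?_, ?_, DF_sub_Delta w⟩
  · rw [hK]
    refine ⟨ee 0, fun ε hε => ⟨fun _ => 0, 1, one_pos, fun r hr => ⟨0, by omega, by simp, ?_⟩, ?_⟩⟩
    · rw [hw.1]; exact (by decide : (0 : Fin 3) < 2)
    · rw [birk_eq]; simp [hε.le]
  · refine IsCompact.of_isClosed_subset (isCompact_Icc (a := (0 : Fin 3 → ℝ)) (b := 1))
      (hK ▸ KK_closed w) ((DF_sub_Delta w).trans ?_)
    rintro α ⟨h0, h1⟩
    refine ⟨h0, fun i => ?_⟩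
    have a0 := h0 0
    have a1 := h0 1
    have a2 := h0 2
    fin_cases i <;> simp <;> linarith
  · rw [hK]; exact KK_convex w
end

section
/- The map w ↦ DF(w) from Max (with the subspace topology induced from the product topology on Σ⁺) to the space of nonempty compact subsets of ℝ³ with the Hausdorff metric is continuous, and it is non-decreasing: if w, w' ∈ Max with w ≤ w' in the lexicographic order, then DF(w) ⊆ DF(w'). -/
open Filter Topology MeasureTheory

namespace Stmt7Aux

theorem shift_iter (s : Seq3) (r i : ℕ) : (shift^[r] s) i = s (r + i) := by
  induction r generalizing s with
  | zero => simp
  | succ r ih =>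
    rw [Function.iterate_succ_apply, ih]
    simp only [shift]; congr 1; omega

theorem lexLe_trans {a b c : Seq3} (h1 : lexLe a b) (h2 : lexLe b c) : lexLe a c := by
  rcases h1 with rfl | ⟨n, hn, hn'⟩
  · exact h2
  rcases h2 with rfl | ⟨m, hm, hm'⟩
  · exact Or.inr ⟨n, hn, hn'⟩
  right
  rcases lt_trichotomy n m with h | h | h
  · exact ⟨n, fun i hi => (hn i hi).trans (hm i (by omega)), (hm n h) ▸ hn'⟩
  · subst h
    exact ⟨n, fun i hi => (hn i hi).trans (hm i hi), hn'.trans hm'⟩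
  · exact ⟨m, fun i hi => (hn i (by omega)).trans (hm i hi), (hn m h).symm ▸ hm'⟩

theorem DF_mono {w w' : Seq3} (h : lexLe w w') : DF w ⊆ DF w' := by
  rintro v ⟨s, hs, hv⟩
  exact ⟨s, fun r => lexLe_trans (hs r) h, hv⟩

noncomputable def ev (a : Fin 3) : Fin 3 → ℝ := fun i => if i = a then 1 else 0

theorem birk_eq (s : Seq3) (r : ℕ) : birk s r = ∑ i ∈ Finset.range r, ev (s i) := by
  unfold birk
  refine Finset.sum_congr rfl fun i _ => ?_
  funext a
  simp [kappa, ev, shift_iter]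

theorem norm_ev (a : Fin 3) : ‖ev a‖ ≤ 1 := by
  rw [pi_norm_le_iff_of_nonneg zero_le_one]
  intro i; unfold ev; split_ifs <;> simp

theorem norm_ev_sub (a b : Fin 3) : ‖ev a - ev b‖ ≤ 1 := by
  rw [pi_norm_le_iff_of_nonneg zero_le_one]
  intro i; simp only [ev, Pi.sub_apply]; split_ifs <;> simp

theorem birk_congr {s t : Seq3} {n : ℕ} (h : ∀ i < n, s i = t i) : birk s n = birk t n := by
  rw [birk_eq, birk_eq]
  exact Finset.sum_congr rfl fun i hi => by rw [h i (Finset.mem_range.1 hi)]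

theorem birk_add (s : Seq3) (n m : ℕ) :
    birk s (n + m) = birk s n + birk (fun i => s (n + i)) m := by
  simp only [birk_eq, Finset.sum_range_add]

theorem norm_birk (s : Seq3) (n : ℕ) : ‖birk s n‖ ≤ n := by
  rw [birk_eq]
  refine (norm_sum_le _ _).trans ?_
  refine (Finset.sum_le_sum fun i _ => norm_ev (s i)).trans ?_
  simp

def Free (w s : Seq3) (n : ℕ) : Prop :=
  ∀ j < n, ∃ k, j + k < n ∧ (∀ i < k, s (j + i) = w i) ∧ s (j + k) < w k

def Wk (w s : Seq3) (n : ℕ) : Prop :=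
  ∀ j k, j + k < n → (∀ i < k, s (j + i) = w i) → s (j + k) ≤ w k

theorem Free.wk {w s : Seq3} {n : ℕ} (h : Free w s n) : Wk w s n := by
  intro j k hjk hi
  obtain ⟨k', h1, h2, h3⟩ := h j (by omega)
  rcases lt_trichotomy k k' with hk | hk | hk
  · exact (h2 k hk).le
  · subst hk; exact h3.le
  · exact absurd (hi k' hk) h3.ne

theorem Wk.sub {w s : Seq3} {n : ℕ} (h : Wk w s n) (a m : ℕ) (ham : a + m ≤ n) :
    Wk w (fun i => s (a + i)) m := by
  intro j k hjk hi
  have := h (a + j) k (by omega) (fun i hik => by simpa [add_assoc] using hi i hik)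
  simpa [add_assoc] using this

theorem wk_of_mem {w s : Seq3} (h : s ∈ BetaShift w) (n : ℕ) : Wk w s n := by
  intro j k _ hi
  rcases h j with h | ⟨m, h1, h2⟩
  · rw [← h, shift_iter]
  · rw [shift_iter] at h2
    rcases lt_trichotomy k m with hk | hk | hk
    · have := h1 k hk
      rw [shift_iter] at this
      exact this.le
    · subst hk; exact h2.le
    · exact absurd (hi m hk) h2.ne

theorem free_fix {w s : Seq3} {n : ℕ} (hw : w 0 = 2) (h : Wk w s n) :
    ∃ t, Free w t n ∧ ‖birk t n - birk s n‖ ≤ 1 := by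
  have hw0 : (0 : Fin 3) < w 0 := by rw [hw]; decide
  by_cases hz : ∀ i < n, s i = 0
  · refine ⟨s, fun j hj => ⟨0, by omega, by simp, ?_⟩, by simp⟩
    simpa [hz j hj] using hw0
  push Not at hz
  obtain ⟨m, ⟨hmn, hm0⟩, hmax⟩ : ∃ m, (m < n ∧ s m ≠ 0) ∧ ∀ i, m < i → i < n → s i = 0 := by
    classical
    obtain ⟨i, hi⟩ := hz
    refine ⟨Nat.findGreatest (fun i => i < n ∧ s i ≠ 0) n,
      Nat.findGreatest_spec (P := fun i => i < n ∧ s i ≠ 0) hi.1.le hi, ?_⟩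
    intro j hj hjn
    by_contra hne
    exact Nat.findGreatest_is_greatest hj hjn.le ⟨hjn, hne⟩
  refine ⟨Function.update s m 0, ?_, ?_⟩
  · intro j hj
    by_cases hjm : j ≤ m
    · by_cases hag : ∀ i < m - j, s (j + i) = w i
      · refine ⟨m - j, by omega, fun i hi => ?_, ?_⟩
        · rw [Function.update_of_ne (by omega)]; exact hag i hi
        · have := h j (m - j) (by omega) hag
          have e : j + (m - j) = m := by omega
          rw [e] at this ⊢
          rw [Function.update_self]
          exact lt_of_lt_of_le (Fin.pos_of_ne_zero hm0) this
      · push Not at hag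
        classical
        have hs := Nat.find_spec hag
        have hmin : ∀ i < Nat.find hag, s (j + i) = w i := by
          intro i hi
          by_contra hne
          exact Nat.find_min hag hi ⟨by omega, hne⟩
        refine ⟨Nat.find hag, by omega, fun i hi => ?_, ?_⟩
        · rw [Function.update_of_ne (by omega)]; exact hmin i hi
        · rw [Function.update_of_ne (by omega)]
          exact lt_of_le_of_ne (h j _ (by omega) hmin) hs.2
    · refine ⟨0, by omega, by simp, ?_⟩
      rw [Function.update_of_ne (by omega), add_zero, hmax j (by omega) hj]
      exact hw0
  · rw [birk_eq, birk_eq, ← Finset.sum_sub_distrib,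
      Finset.sum_eq_single_of_mem m (Finset.mem_range.2 hmn)]
    · exact norm_ev_sub _ _
    · intro i _ hi
      rw [Function.update_of_ne hi, sub_self]

theorem Free.congr {w v s : Seq3} {n : ℕ} (hwv : ∀ i < n, w i = v i) (h : Free w s n) :
    Free v s n := by
  intro j hj
  obtain ⟨k, h1, h2, h3⟩ := h j hj
  exact ⟨k, h1, fun i hi => (h2 i hi).trans (hwv i (by omega)), hwv k (by omega) ▸ h3⟩

def blk (N : ℕ) (c : ℕ → Seq3) : Seq3 := fun i => c (i / N) (i % N)

theorem blk_apply {N : ℕ} (c : ℕ → Seq3) (b i : ℕ) (hi : i < N) : blk N c (N * b + i) = c b i := by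
  have hN : 0 < N := by omega
  unfold blk
  rw [Nat.mul_add_div hN, Nat.div_eq_of_lt hi, Nat.mul_add_mod, Nat.mod_eq_of_lt hi, add_zero]

theorem blk_free {N n : ℕ} {v : Seq3} {c : ℕ → Seq3} (h : ∀ b < n, Free v (c b) N) :
    Free v (blk N c) (N * n) := by
  intro j hj
  have hN : 0 < N := by
    rcases Nat.eq_zero_or_pos N with h | h
    · subst h; simp at hj
    · exact h
  have hb : j / N < n := Nat.div_lt_of_lt_mul hj
  obtain ⟨k, h1, h2, h3⟩ := h (j / N) hb (j % N) (Nat.mod_lt _ hN)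
  have hj' : j = N * (j / N) + j % N := (Nat.div_add_mod j N).symm
  have key : ∀ i ≤ k, blk N c (j + i) = c (j / N) (j % N + i) := by
    intro i hi
    conv_lhs => rw [hj', add_assoc]
    exact blk_apply c _ _ (by omega)
  refine ⟨k, ?_, fun i hi => (key i hi.le).trans (h2 i hi), (key k le_rfl) ▸ h3⟩
  have : N * (j / N + 1) ≤ N * n := Nat.mul_le_mul_left _ hb
  rw [mul_add, mul_one] at this
  omega

theorem blk_birk (N n : ℕ) (c : ℕ → Seq3) :
    birk (blk N c) (N * n) = ∑ b ∈ Finset.range n, birk (c b) N := by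
  induction n with
  | zero => simp [birk]
  | succ n ih =>
    rw [mul_add, mul_one, birk_add, ih, Finset.sum_range_succ]
    congr 1
    exact birk_congr fun i hi => blk_apply c n i hi

def FS (w : Seq3) : Set (Fin 3 → ℝ) :=
  {x | ∃ s n, 0 < n ∧ Free w s n ∧ x = (n : ℝ)⁻¹ • birk s n}

theorem FS_close {w v : Seq3} {N : ℕ} (hN : 0 < N) (hw : w 0 = 2)
    (hwv : ∀ i < N, w i = v i) {x : Fin 3 → ℝ} (hx : x ∈ FS w) :
    ∃ y ∈ FS v, dist x y ≤ (N : ℝ)⁻¹ := by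
  obtain ⟨s, n, hn, hs, rfl⟩ := hx
  have hp : Free w (blk n fun _ => s) (n * N) := blk_free fun _ _ => hs
  set p := blk n fun _ => s with hpdef
  have hfix : ∀ b, ∃ t, b < n → Free w t N ∧ ‖birk t N - birk (fun i => p (N * b + i)) N‖ ≤ 1 := by
    intro b
    by_cases hb : b < n
    · have hle : N * b + N ≤ n * N := by
        have : N * (b + 1) ≤ N * n := Nat.mul_le_mul_left _ hb
        linarith
      obtain ⟨t, ht⟩ := free_fix hw (hp.wk.sub (N * b) N hle)
      exact ⟨t, fun _ => ht⟩
    · exact ⟨s, fun h => absurd h hb⟩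
  choose t ht using hfix
  have hpb : birk p (N * n) = ∑ b ∈ Finset.range n, birk (fun i => p (N * b + i)) N := by
    rw [← blk_birk]
    refine birk_congr fun i _ => ?_
    show p i = p (N * (i / N) + i % N)
    rw [Nat.div_add_mod]
  have hpb2 : birk p (N * n) = (N : ℝ) • birk s n := by
    rw [mul_comm, hpdef, blk_birk]
    simp [Nat.cast_smul_eq_nsmul]
  have hNn : 0 < N * n := Nat.mul_pos hN hn
  refine ⟨_, ⟨blk N t, N * n, hNn, blk_free fun b hb => (ht b hb).1.congr hwv, rfl⟩, ?_⟩
  have hNr : (0 : ℝ) < N := by exact_mod_cast hN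
  have hnr : (0 : ℝ) < n := by exact_mod_cast hn
  have e1 : (n : ℝ)⁻¹ • birk s n = ((N * n : ℕ) : ℝ)⁻¹ • birk p (N * n) := by
    rw [hpb2, smul_smul]
    congr 1
    push_cast
    field_simp
  rw [e1, dist_comm, dist_eq_norm, ← smul_sub, norm_smul, hpb, blk_birk, ← Finset.sum_sub_distrib]
  have e2 : ‖∑ b ∈ Finset.range n, (birk (t b) N - birk (fun i => p (N * b + i)) N)‖ ≤ n := by
    refine (norm_sum_le _ _).trans ?_
    refine (Finset.sum_le_sum fun b hb => (ht b (Finset.mem_range.1 hb)).2).trans ?_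
    simp
  rw [Real.norm_of_nonneg (by positivity)]
  calc _ ≤ ((N * n : ℕ) : ℝ)⁻¹ * n := by gcongr
    _ = (N : ℝ)⁻¹ := by push_cast; field_simp

theorem DF_subset {w : Seq3} (hw : w 0 = 2) : DF w ⊆ closure (FS w) := by
  rintro α ⟨s, hs, hα⟩
  choose t ht ht' using fun n => free_fix (n := n) hw (wk_of_mem hs n)
  refine mem_closure_of_tendsto (b := atTop) (f := fun r : ℕ => (r : ℝ)⁻¹ • birk (t r) r) ?_ ?_
  · have : Tendsto (fun r : ℕ => (r : ℝ)⁻¹ • (birk (t r) r - birk s r)) atTop (𝓝 0) := by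
      refine squeeze_zero_norm (a := fun r : ℕ => (r : ℝ)⁻¹) (fun r => ?_)
        tendsto_inv_atTop_nhds_zero_nat
      rw [norm_smul, Real.norm_of_nonneg (by positivity)]
      exact mul_le_of_le_one_right (by positivity) (ht' r)
    have := this.add hα
    simpa [smul_sub] using this
  · filter_upwards [eventually_gt_atTop 0] with r hr
    exact ⟨t r, r, hr, ht r, rfl⟩

theorem exists_concat (U : ℕ → Seq3) (l : ℕ → ℕ) (hl : ∀ n, 0 < l n) :
    ∃ s : Seq3, ∀ n i, i < l n → s ((∑ j ∈ Finset.range n, l j) + i) = U n i := by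
  classical
  set T : ℕ → ℕ := fun n => ∑ j ∈ Finset.range n, l j with hT
  have hTs : ∀ n, T (n + 1) = T n + l n := fun n => Finset.sum_range_succ _ _
  have hmono : StrictMono T := strictMono_nat_of_lt_succ fun n => by
    rw [hTs]; have := hl n; omega
  have hex : ∀ j, ∃ n, j < T (n + 1) := fun j => ⟨j, hmono.id_le (j + 1)⟩
  refine ⟨fun j => U (Nat.find (hex j)) (j - T (Nat.find (hex j))), fun n i hi => ?_⟩
  have : Nat.find (hex (T n + i)) = n := by
    rw [Nat.find_eq_iff]
    refine ⟨by rw [hTs]; omega, fun m hm => ?_⟩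
    have := hmono.monotone (show m + 1 ≤ n from hm)
    omega
  show U (Nat.find (hex (T n + i))) (T n + i - T (Nat.find (hex (T n + i)))) = _
  rw [this]; congr 1; omega

theorem slow (f : ℕ → ℕ) : ∃ k : ℕ → ℕ, Tendsto k atTop atTop ∧ ∀ᶠ n in atTop, f (k n) ≤ n := by
  classical
  refine ⟨fun n => Nat.findGreatest (fun k => f k ≤ n) n, ?_, ?_⟩
  · rw [tendsto_atTop]
    intro K
    filter_upwards [eventually_ge_atTop K, eventually_ge_atTop (f K)] with n h1 h2
    exact Nat.le_findGreatest h1 h2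
  · filter_upwards [eventually_ge_atTop (f 0)] with n hn
    exact Nat.findGreatest_spec (P := fun k => f k ≤ n) (Nat.zero_le n) hn

theorem closure_subset {w : Seq3} : closure (FS w) ⊆ DF w := by
  intro α hα
  obtain ⟨x, hx, hxα⟩ := mem_closure_iff_seq_limit.1 hα
  choose V m hm hV hxV using hx
  obtain ⟨k, hk, hkm⟩ := slow fun n => m n ^ 2
  set U : ℕ → Seq3 := fun n => V (k n) with hU
  set l : ℕ → ℕ := fun n => m (k n) with hldef
  have hl : ∀ n, 0 < l n := fun n => hm _
  have hfree : ∀ n, Free w (U n) (l n) := fun n => hV _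
  have hlim : Tendsto (fun n => (l n : ℝ)⁻¹ • birk (U n) (l n)) atTop (𝓝 α) := by
    have := hxα.comp hk
    refine this.congr fun n => ?_
    simp [hxV, hU, hldef]
  obtain ⟨s, hs⟩ := exists_concat U l hl
  set T : ℕ → ℕ := fun n => ∑ j ∈ Finset.range n, l j with hT
  have hTs : ∀ n, T (n + 1) = T n + l n := fun n => Finset.sum_range_succ _ _
  have hmono : StrictMono T := strictMono_nat_of_lt_succ fun n => by
    rw [hTs]; have := hl n; omega
  have hT0 : T 0 = 0 := by simp [hT]
  have hloc : ∀ r, ∃ n i, r = T n + i ∧ i < l n := by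
    intro r
    induction r with
    | zero => exact ⟨0, 0, by simp [hT0], hl 0⟩
    | succ r ih =>
      obtain ⟨n, i, h1, h2⟩ := ih
      by_cases h : i + 1 < l n
      · exact ⟨n, i + 1, by omega, h⟩
      · exact ⟨n + 1, 0, by rw [hTs]; omega, hl _⟩
  refine ⟨s, ?_, ?_⟩
  · intro r
    obtain ⟨n, i, rfl, hi⟩ := hloc r
    obtain ⟨q, h1, h2, h3⟩ := hfree n i hi
    refine Or.inr ⟨q, fun a ha => ?_, ?_⟩
    · rw [shift_iter, add_assoc, hs n _ (by omega), h2 a ha]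
    · rw [shift_iter, add_assoc, hs n _ (by omega)]; exact h3
  · have hTE : ∀ n, birk s (T n) - (T n : ℝ) • α
        = ∑ j ∈ Finset.range n, (birk (U j) (l j) - (l j : ℝ) • α) := by
      intro n
      induction n with
      | zero => simp [hT0, birk]
      | succ n ih =>
        rw [Finset.sum_range_succ, ← ih, hTs, birk_add, birk_congr (hs n)]
        push_cast
        rw [add_smul]; abel
    have ho : (fun n => birk (U n) (l n) - (l n : ℝ) • α) =o[atTop] (fun n => (l n : ℝ)) := by
      rw [Asymptotics.isLittleO_iff]
      intro c hc
      filter_upwards [Metric.tendsto_nhds.1 hlim c hc] with n hn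
      have hln : (0 : ℝ) < l n := by exact_mod_cast hl n
      have : birk (U n) (l n) - (l n : ℝ) • α
          = (l n : ℝ) • ((l n : ℝ)⁻¹ • birk (U n) (l n) - α) := by
        rw [smul_sub, smul_smul, mul_inv_cancel₀ hln.ne', one_smul]
      rw [this, norm_smul, mul_comm, ← dist_eq_norm]
      gcongr
    have hTtop : Tendsto (fun n => ∑ j ∈ Finset.range n, (l j : ℝ)) atTop atTop := by
      have : Tendsto (fun n => (T n : ℝ)) atTop atTop :=
        tendsto_natCast_atTop_atTop.comp hmono.tendsto_atTop
      simpa [hT] using this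
    have hsum := ho.sum_range (fun n => by positivity) hTtop
    have hsum' : (fun n => birk s (T n) - (T n : ℝ) • α) =o[atTop] (fun n => (T n : ℝ)) := by
      refine hsum.congr (fun n => (hTE n).symm) (fun n => by simp [hT])
    have hlT : (fun n => (l n : ℝ)) =o[atTop] (fun n => (T n : ℝ)) := by
      rw [Asymptotics.isLittleO_iff]
      intro c hc
      obtain ⟨M, hM⟩ := exists_nat_gt (c⁻¹ ^ 2)
      filter_upwards [hkm, eventually_ge_atTop M] with n hn hnM
      have h1 : ((l n : ℝ)) ^ 2 ≤ n := by exact_mod_cast hn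
      have h2 : (n : ℝ) ≤ T n := by exact_mod_cast hmono.id_le n
      have h3 : c⁻¹ ^ 2 ≤ (n : ℝ) := hM.le.trans (by exact_mod_cast hnM)
      rw [Real.norm_of_nonneg (by positivity), Real.norm_of_nonneg (by positivity)]
      have h4 : (1 : ℝ) ≤ c ^ 2 * n := by
        have : c ^ 2 * c⁻¹ ^ 2 ≤ c ^ 2 * n := by gcongr
        rwa [← mul_pow, mul_inv_cancel₀ hc.ne', one_pow] at this
      have h5 : (l n : ℝ) ^ 2 ≤ (c * n) ^ 2 := by
        have : (0 : ℝ) ≤ n := by positivity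
        nlinarith
      have h6 : (l n : ℝ) ≤ c * n := by
        exact le_of_sq_le_sq h5 (by positivity)
      exact h6.trans (by gcongr)
    have hE : (fun r : ℕ => birk s r - (r : ℝ) • α) =o[atTop] (fun r : ℕ => (r : ℝ)) := by
      rw [Asymptotics.isLittleO_iff]
      intro c hc
      set d : ℝ := c / (2 + ‖α‖) with hd
      have hdpos : 0 < d := by positivity
      obtain ⟨n0, hn0⟩ := eventually_atTop.1
        ((Asymptotics.isLittleO_iff.1 hsum' hdpos).and (Asymptotics.isLittleO_iff.1 hlT hdpos))
      filter_upwards [eventually_ge_atTop (T n0)] with r hr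
      obtain ⟨n, i, rfl, hi⟩ := hloc r
      have hn : n0 ≤ n := by
        by_contra hlt
        have := hmono.monotone (show n + 1 ≤ n0 by omega)
        rw [hTs] at this
        omega
      obtain ⟨h1, h2⟩ := hn0 n hn
      rw [Real.norm_of_nonneg (by positivity)] at h1
      rw [Real.norm_of_nonneg (by positivity), Real.norm_of_nonneg (by positivity)] at h2
      rw [Real.norm_of_nonneg (by positivity)]
      have e : birk s (T n + i) - ((T n + i : ℕ) : ℝ) • α = (birk s (T n) - (T n : ℝ) • α)
          + (birk (fun j => s (T n + j)) i - (i : ℝ) • α) := by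
        rw [birk_add]; push_cast; rw [add_smul]; abel
      have h3 : ‖birk (fun j => s (T n + j)) i - (i : ℝ) • α‖ ≤ i * (1 + ‖α‖) := by
        refine (norm_sub_le _ _).trans ?_
        rw [norm_smul, Real.norm_of_nonneg (by positivity)]
        have := norm_birk (fun j => s (T n + j)) i
        linarith
      have h4 : (i : ℝ) ≤ d * T n := le_trans (by exact_mod_cast hi.le) h2
      rw [e]
      calc _ ≤ d * T n + i * (1 + ‖α‖) := (norm_add_le _ _).trans (add_le_add h1 h3)
        _ ≤ d * T n + d * T n * (1 + ‖α‖) := by gcongr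
        _ = c * T n := by rw [hd]; field_simp; ring
        _ ≤ c * ((T n + i : ℕ) : ℝ) := by gcongr; omega
    unfold hasFreq
    rw [Metric.tendsto_nhds]
    intro ε hε
    filter_upwards [Asymptotics.isLittleO_iff.1 hE (half_pos hε), eventually_gt_atTop 0] with r h1 h2
    have hr : (0 : ℝ) < r := by exact_mod_cast h2
    have : (r : ℝ)⁻¹ • birk s r - α = (r : ℝ)⁻¹ • (birk s r - (r : ℝ) • α) := by
      rw [smul_sub, smul_smul, inv_mul_cancel₀ hr.ne', one_smul]
    rw [dist_eq_norm, this, norm_smul, Real.norm_of_nonneg (by positivity)]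
    rw [Real.norm_of_nonneg hr.le] at h1
    calc _ ≤ (r : ℝ)⁻¹ * (ε / 2 * r) := by gcongr
      _ = ε / 2 := by field_simp
      _ < ε := half_lt_self hε

theorem DF_eq {w : Seq3} (hw : w 0 = 2) : DF w = closure (FS w) :=
  (DF_subset hw).antisymm closure_subset

theorem FS_sub (w : Seq3) : FS w ⊆ Metric.closedBall 0 1 := by
  rintro x ⟨s, n, hn, _, rfl⟩
  have hr : (0 : ℝ) < n := by exact_mod_cast hn
  rw [mem_closedBall_zero_iff, norm_smul, Real.norm_of_nonneg (by positivity)]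
  calc _ ≤ (n : ℝ)⁻¹ * n := by gcongr; exact norm_birk s n
    _ = 1 := inv_mul_cancel₀ hr.ne'

theorem FS_nonempty {w : Seq3} (hw : w 0 = 2) : (FS w).Nonempty := by
  refine ⟨_, fun _ => 0, 1, one_pos, fun j hj => ⟨0, by omega, by simp, ?_⟩, rfl⟩
  rw [hw]
  show (0 : Fin 3) < 2
  decide

theorem FS_bdd (w : Seq3) : Bornology.IsBounded (FS w) :=
  Metric.isBounded_closedBall.subset (FS_sub w)

noncomputable def F (w : {w : Seq3 // w ∈ MaxSet}) :
    TopologicalSpace.NonemptyCompacts (Fin 3 → ℝ) where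
  carrier := closure (FS w.1)
  isCompact' := (FS_bdd w.1).isCompact_closure
  nonempty' := (FS_nonempty w.2.1).closure

theorem dist_F (w v : {w : Seq3 // w ∈ MaxSet}) (N : ℕ) (hN : 0 < N)
    (h : ∀ i < N, w.1 i = v.1 i) : dist (F w) (F v) ≤ (N : ℝ)⁻¹ := by
  rw [Metric.NonemptyCompacts.dist_eq]
  show Metric.hausdorffDist (closure (FS w.1)) (closure (FS v.1)) ≤ _
  rw [Metric.hausdorffDist_closure]
  exact Metric.hausdorffDist_le_of_mem_dist (by positivity)
    (fun x hx => FS_close hN w.2.1 h hx)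
    (fun x hx => FS_close hN v.2.1 (fun i hi => (h i hi).symm) hx)

theorem cont_F : Continuous F := by
  rw [continuous_iff_continuousAt]
  intro w
  rw [ContinuousAt, Metric.tendsto_nhds]
  intro ε hε
  obtain ⟨N, hN⟩ := exists_nat_one_div_lt hε
  have hev : ∀ᶠ v in 𝓝 w, ∀ i ∈ Finset.range (N + 1), v.1 i = w.1 i := by
    rw [eventually_all_finset]
    intro i _
    have hc : Continuous fun v : {w : Seq3 // w ∈ MaxSet} => v.1 i :=
      (continuous_apply i).comp continuous_subtype_val
    exact hc.continuousAt.eventually_mem (by simp : {w.1 i} ∈ 𝓝 (w.1 i))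
  filter_upwards [hev] with v hv
  refine (dist_F v w (N + 1) (Nat.succ_pos _)
    (fun i hi => hv i (Finset.mem_range.2 hi))).trans_lt ?_
  simpa using hN

end Stmt7Aux

/-- The map `w ↦ DF(w)` from `Max` to the space of nonempty compact
subsets of `ℝ³` with the Hausdorff metric is continuous, and it is non-decreasing with
respect to the lexicographic order. -/
theorem stmt7 :
    (∃ F : {w : Seq3 // w ∈ MaxSet} → TopologicalSpace.NonemptyCompacts (Fin 3 → ℝ),
      (∀ w, (F w : Set (Fin 3 → ℝ)) = DF w.1) ∧ Continuous F) ∧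
    ∀ w w' : Seq3, w ∈ MaxSet → w' ∈ MaxSet → lexLe w w' → DF w ⊆ DF w' := by
  exact ⟨⟨Stmt7Aux.F, fun w => (Stmt7Aux.DF_eq w.2.1).symm, Stmt7Aux.cont_F⟩,
    fun w w' _ _ h => Stmt7Aux.DF_mono h⟩
end
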